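/- arXiv:1305.2206 — 2 statements merged into one kernel-verified Lean document; each statement's English description precedes it below -/
import Mathlib

section
/- Let k ≥ 1 and x, y, e ∈ ℕ with e + 1 ≤ x. The number of watermelon configurations (p_0,…,p_{k−1}) of k paths of length x and deviation y whose bottom path has exactly e returns (indices 1 ≤ t ≤ x with p_0(t) = 0) equals the number of k-tuples (q_0,…,q_{k−1}) of functions such that (q_0,…,q_{k−2}) is a watermelon configuration of k−1 paths of length x and deviation y, and q_{k−1} : {0,…,x−e−1} → ℕ satisfies |q_{k−1}(t+1) − q_{k−1}(t)| = 1 for all t < x−e−1, q_{k−1}(0) = 2(k−1), q_{k−1}(x−e−1) + 3 = y + 2k + e, and (when k ≥ 2) q_{k−2}(t) < q_{k−1}(t) for all 0 ≤ t ≤ x−e−1. -/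
/-- A watermelon configuration of `m` paths of length `x` and deviation `y`:
`m` non-intersecting paths with unit northeast/southeast steps staying weakly
above the x-axis (automatic in `ℕ`), with `p i` starting at height `2i` and
ending at height `y + 2i`. -/
def IsWatermelon (m x y : ℕ) (p : Fin m → Fin (x+1) → ℕ) : Prop :=
  (∀ (i : Fin m) (t : ℕ) (ht : t < x),
      p i ⟨t + 1, by omega⟩ = p i ⟨t, by omega⟩ + 1 ∨
      p i ⟨t, by omega⟩ = p i ⟨t + 1, by omega⟩ + 1) ∧
  (∀ i : Fin m, p i ⟨0, by omega⟩ = 2 * (i : ℕ) ∧ p i ⟨x, by omega⟩ = y + 2 * (i : ℕ)) ∧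
  (∀ (i : Fin m) (hi : (i : ℕ) + 1 < m) (t : Fin (x+1)), p i t < p ⟨(i : ℕ) + 1, hi⟩ t)


open Polynomial

section walks
variable {V : Type*} [DecidableEq V]

noncomputable def wmWalks (a : V) (nb : ℕ → V → Finset V) : (n : ℕ) → V → Finset (Fin (n+1) → V)
  | 0, v => if v = a then {fun _ => a} else ∅
  | n+1, v => (nb n v).biUnion (fun u => (wmWalks a nb n u).image (fun p => Fin.snoc (α := fun _ => V) p v))

theorem wm_mem_walks (a : V) (nb : ℕ → V → Finset V) (n : ℕ) (v : V) (p : Fin (n+1) → V) :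
    p ∈ wmWalks a nb n v ↔ p 0 = a ∧ (∀ t : Fin n, p t.castSucc ∈ nb t (p t.succ)) ∧ p (Fin.last n) = v := by
  induction n generalizing v with
  | zero =>
    simp only [wmWalks]
    split_ifs with h
    · subst h
      simp only [Finset.mem_singleton]
      constructor
      · rintro rfl; simp
      · rintro ⟨h, -⟩; funext t; rw [show t = 0 from Fin.ext (by omega), h]
    · simp only [Finset.notMem_empty, false_iff]
      rintro ⟨h1, -, h2⟩
      exact h (h2.symm.trans h1)
  | succ n ih =>
    simp only [wmWalks, Finset.mem_biUnion, Finset.mem_image]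
    constructor
    · rintro ⟨u, hu, q, hq, rfl⟩
      rw [ih] at hq
      obtain ⟨h0, h1, h2⟩ := hq
      refine ⟨?_, ?_, by simp⟩
      · have := Fin.snoc_castSucc (α := fun _ => V) (x := v) (p := q) (i := 0)
        simpa [h0] using this
      · intro t
        refine Fin.lastCases ?_ (fun t => ?_) t
        · simp [h2, hu]
        · have h3 := h1 t
          rw [← Fin.castSucc_succ, Fin.snoc_castSucc, Fin.snoc_castSucc]
          exact h3
    · rintro ⟨h0, h1, h2⟩
      refine ⟨p (Fin.last n).castSucc, ?_, fun t => p t.castSucc, ?_, ?_⟩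
      · have := h1 (Fin.last n)
        simpa [h2] using this
      · rw [ih]
        refine ⟨h0, fun t => ?_, rfl⟩
        have := h1 t.castSucc
        simpa [← Fin.castSucc_succ] using this
      · rw [← h2]
        exact Fin.snoc_init_self p

variable {R : Type*} [CommRing R]

noncomputable def wmW (a : V) (nb : ℕ → V → Finset V) (w : V → R) (n : ℕ) (v : V) : R :=
  ∑ p ∈ wmWalks a nb n v, ∏ t : Fin n, w (p t.succ)

theorem wmW_zero (a : V) (nb : ℕ → V → Finset V) (w : V → R) (v : V) :
    wmW a nb w 0 v = if v = a then 1 else 0 := by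
  unfold wmW wmWalks
  split_ifs <;> simp

theorem wmW_succ (a : V) (nb : ℕ → V → Finset V) (w : V → R) (n : ℕ) (v : V) :
    wmW a nb w (n+1) v = w v * ∑ u ∈ nb n v, wmW a nb w n u := by
  unfold wmW
  rw [wmWalks, Finset.sum_biUnion, Finset.mul_sum]
  · refine Finset.sum_congr rfl fun u hu => ?_
    rw [Finset.sum_image, Finset.mul_sum]
    · refine Finset.sum_congr rfl fun p hp => ?_
      rw [Fin.prod_univ_castSucc, mul_comm]
      congr 1
      · simp
      · refine Finset.prod_congr rfl fun t _ => ?_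
        rw [← Fin.castSucc_succ, Fin.snoc_castSucc]
    · intro p _ q _ h
      exact (Fin.snoc_injective2 (α := fun _ => V) h).1
  · intro u hu u' hu' hne
    rw [Function.onFun, Finset.disjoint_left]
    rintro p hp hp'
    simp only [Finset.mem_image] at hp hp'
    obtain ⟨q, hq, rfl⟩ := hp
    obtain ⟨q', hq', h⟩ := hp'
    have := (Fin.snoc_injective2 (α := fun _ => V) h).1
    subst this
    rw [wm_mem_walks] at hq hq'
    exact hne (hq.2.2.symm.trans hq'.2.2)

end walks

open Classical in
theorem wm_KM {k : ℕ} {R : Type*} [CommRing R] (a : Fin k → ℕ) (S : ℕ → Fin k → ℕ → Finset ℕ)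
    (w : ℕ → R) (P Q : ℕ → (Fin k → ℕ) → Prop) (u : ℕ → Fin k → ℕ → Fin k → R)
    (hu : ∀ n j h, u (n+1) j h = w h • ∑ h' ∈ S n j h, u n j h')
    (h0 : ∀ b, P 0 b → Q 0 b → Matrix.det (Matrix.of fun j => u 0 j (b j)) = if b = a then 1 else 0)
    (hstep : ∀ n b, P (n+1) b → Q (n+1) b → ∀ b' ∈ Fintype.piFinset (fun j => S n j (b j)),
      Q n b' ∧ (¬ P n b' → Matrix.det (Matrix.of fun j => u n j (b' j)) = 0))
    (n : ℕ) (b : Fin k → ℕ) (hP : P n b) (hQ : Q n b) :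
    wmW a (fun n b => (Fintype.piFinset (fun j => S n j (b j))).filter (P n)) (fun b => ∏ j, w (b j)) n b
      = Matrix.det (Matrix.of fun j => u n j (b j)) := by
  induction n generalizing b with
  | zero => rw [wmW_zero, h0 b hP hQ]
  | succ n ih =>
    rw [wmW_succ]
    have key : Matrix.det (Matrix.of fun j => u (n+1) j (b j)) =
        (∏ j, w (b j)) * ∑ b' ∈ Fintype.piFinset (fun j => S n j (b j)),
          Matrix.det (Matrix.of fun j => u n j (b' j)) := by
      have e1 : Matrix.det (Matrix.of fun j => u (n+1) j (b j)) =
        (Matrix.detRowAlternating (R := R) (n := Fin k)).toMultilinearMap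
          (fun j => w (b j) • ∑ h' ∈ S n j (b j), u n j h') := by
        simp only [hu]; rfl
      rw [e1, MultilinearMap.map_smul_univ, MultilinearMap.map_sum_finset]
      rfl
    rw [key]
    congr 1
    rw [Finset.sum_filter]
    refine Finset.sum_congr rfl fun b' hb' => ?_
    obtain ⟨h1, h2⟩ := hstep n b hP hQ b' hb'
    split_ifs with h
    · exact ih b' h h1
    · exact (h2 h).symm

def wmS (h : ℕ) : Finset ℕ := (Finset.range (h+2)).filter (fun h' => h' = h+1 ∨ h = h'+1)

theorem wm_mem_S (h h' : ℕ) : h' ∈ wmS h ↔ h' = h+1 ∨ h = h'+1 := by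
  simp [wmS]; omega

theorem wmS_zero : wmS 0 = {1} := by ext; simp [wm_mem_S]
theorem wmS_succ (h : ℕ) : wmS (h+1) = {h, h+2} := by ext; simp [wm_mem_S]; omega

theorem wm_sumS_zero {M : Type*} [AddCommMonoid M] (f : ℕ → M) : ∑ h ∈ wmS 0, f h = f 1 := by
  simp [wmS_zero]
theorem wm_sumS_succ {M : Type*} [AddCommMonoid M] (f : ℕ → M) (n : ℕ) :
    ∑ h ∈ wmS (n+1), f h = f n + f (n+2) := by
  rw [wmS_succ, Finset.sum_pair (by omega)]

noncomputable def wmF {R : Type*} [CommRing R] (w : ℕ → R) (s : ℕ → R) : ℕ → ℕ → R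
  | 0, h => s h
  | n+1, h => w h * ∑ h' ∈ wmS h, wmF w s n h'

/-- delta -/
def wmD (R : Type*) [CommRing R] (a h : ℕ) : R := if h = a then 1 else 0

/-- weight -/
noncomputable def wmw (h : ℕ) : ℤ[X] := if h = 0 then X else 1

theorem wm_det_delta {k : ℕ} {R : Type*} [CommRing R] (a b : Fin k → ℕ) (ha : StrictMono a) (hb : StrictMono b) :
    Matrix.det (Matrix.of fun j i => wmD R (a i) (b j)) = if b = a then 1 else 0 := by
  split_ifs with h
  · subst h
    convert Matrix.det_one (n := Fin k) (R := R)
    ext i j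
    simp [wmD, Matrix.one_apply, hb.injective.eq_iff]
  · by_cases hr : ∀ j, ∃ i, b j = a i
    · exfalso
      choose σ hσ using hr
      have hs : StrictMono σ := by
        intro i j hij
        have := hb hij
        rw [hσ, hσ] at this
        exact ha.lt_iff_lt.1 this
      have h1 : σ = id := by
        have := Finite.injective_iff_surjective.1 hs.injective
        have h2 := Subsingleton.elim (StrictMono.orderIsoOfSurjective σ hs this) (OrderIso.refl _)
        funext i
        exact congrArg (fun f => f i) h2
      apply h
      funext j
      rw [hσ, h1]; rfl
    · push Not at hr
      obtain ⟨j, hj⟩ := hr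
      apply Matrix.det_eq_zero_of_row_eq_zero j
      intro i
      simp [wmD, hj i]

noncomputable def wmT (i n h : ℕ) : ℤ[X] := 
  match i with
  | 0 => wmF wmw (wmD _ 0) n h
  | i+1 => wmF wmw (wmD _ (2*(i+1))) n h + (X - 1) * wmT i n h

theorem wmT_succ (i n h : ℕ) : wmT i (n+1) h = wmw h * ∑ h' ∈ wmS h, wmT i n h' := by
  induction i with
  | zero => simp only [wmT]; rfl
  | succ i ih =>
    simp only [wmT, ih, Finset.sum_add_distrib, ← Finset.mul_sum]
    rw [wmF]; ring

theorem wmT_zero_eq (i h : ℕ) : wmT i 0 h = if h % 2 = 0 ∧ h ≤ 2*i then (X-1)^(i - h/2) else 0 := by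
  induction i with
  | zero => simp only [wmT, wmF, wmD]; split_ifs <;> first | omega | simp
  | succ i ih =>
    simp only [wmT, wmF, wmD, ih]
    split_ifs <;> first | omega | skip
    · have : i + 1 - h/2 = 0 := by omega
      rw [this]; simp
    · have : i + 1 - h/2 = (i-h/2) + 1 := by omega
      rw [this, pow_succ]; ring
    · simp

/-- the unweighted numbers -/
noncomputable def wmf (a n h : ℕ) : ℤ := wmF (fun _ => 1) (wmD ℤ a) n h

theorem wmf_succ_zero (a n : ℕ) : wmf a (n+1) 0 = wmf a n 1 := by
  simp [wmf, wmF, wm_sumS_zero]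
theorem wmf_succ_succ (a n h : ℕ) : wmf a (n+1) (h+1) = wmf a n h + wmf a n (h+2) := by
  simp [wmf, wmF, wm_sumS_succ]

theorem wmT_rec (i n h : ℕ) : wmT i n h = C (wmf (2*i) n h) + (X-1) * wmT i n (h+2) := by
  induction n generalizing h with
  | zero =>
    simp only [wmT_zero_eq, wmf, wmF, wmD]
    by_cases h1 : h = 2*i
    · subst h1; simp
    · simp only [h1, if_false, map_zero, zero_add]
      split_ifs <;> first | omega | skip
      · rw [← pow_succ']; congr 1; omega
      · simp
  | succ n ih =>
    rcases h with _ | h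
    · rw [wmT_succ, wmT_succ, wm_sumS_zero, wm_sumS_succ (n := 1), wmf_succ_zero]
      simp only [wmw]
      have := ih 1
      norm_num at this ⊢
      linear_combination this
    · rw [wmT_succ, wmT_succ, wm_sumS_succ, wm_sumS_succ (n := h+2), wmf_succ_succ]
      simp only [wmw]
      have h1 := ih h
      have h2 := ih (h+2)
      norm_num at h1 h2 ⊢
      linear_combination h1 + h2

theorem wmT_supp (i n h : ℕ) (hh : 2*i + n < h) : wmT i n h = 0 := by
  induction n generalizing h with
  | zero => rw [wmT_zero_eq, if_neg (by omega)]
  | succ n ih =>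
    rw [wmT_succ]
    convert mul_zero _
    apply Finset.sum_eq_zero
    intro h' hh'
    rw [wm_mem_S] at hh'
    exact ih _ (by omega)

theorem wmf_supp (i n h : ℕ) (hh : i + n < h) : wmf i n h = 0 := by
  induction n generalizing h with
  | zero => simp [wmf, wmF, wmD]; omega
  | succ n ih =>
    rcases h with _ | h
    · omega
    · rw [wmf_succ_succ, ih _ (by omega), ih _ (by omega)]; rfl

/-- shifted: value at height h-1 -/
noncomputable def wmf' (a n h : ℕ) : ℤ := if h = 0 then 0 else wmf a n (h-1)

theorem wmf'_rec (a n h : ℕ) : wmf' a n h + wmf' a n (h+2) = wmf a (n+1) h := by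
  rcases h with _ | h
  · simp [wmf', wmf_succ_zero]
  · simp [wmf', wmf_succ_succ]

theorem wm_uniq (d : ℕ → ℤ) (N : ℕ) (h1 : ∀ h, N < h → d h = 0) (h2 : ∀ h, d h + d (h+2) = 0) (h : ℕ) : d h = 0 := by
  have : ∀ m h, N < h + 2*m → d h = 0 := by
    intro m
    induction m with
    | zero => intro h hh; exact h1 h (by omega)
    | succ m ih =>
      intro h hh
      have := ih (h+2) (by omega)
      have := h2 h
      omega
  exact this (N+1) h (by omega)

theorem wmT_coeff (i n e h : ℕ) : (wmT i (n+e+1) h).coeff e = wmf' (2*i) n (h+e) := by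
  induction e generalizing n h with
  | zero =>
    have := wm_uniq (fun h => (wmT i (n+0+1) h).coeff 0 - wmf' (2*i) n (h+0)) (2*i+n+2) 
      (by
        intro h hh
        rw [wmT_supp _ _ _ (by omega)]
        simp only [wmf']
        rw [if_neg (by omega), wmf_supp _ _ _ (by omega)]; simp)
      (by
        intro h
        have h1 := wmf'_rec (2*i) n h
        have h2 := congrArg (fun p => p.coeff 0) (wmT_rec i (n+0+1) h)
        simp [sub_mul] at h1 h2 ⊢
        linarith) h
    linarith
  | succ e ih =>
    have := wm_uniq (fun h => (wmT i (n+(e+1)+1) h).coeff (e+1) - wmf' (2*i) n (h+(e+1))) (2*i+n+e+3) 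
      (by
        intro h hh
        rw [wmT_supp _ _ _ (by omega)]
        simp only [wmf']
        rw [if_neg (by omega), wmf_supp _ _ _ (by omega)]; simp)
      (by
        intro h
        have h1 := wmf'_rec (2*i) n (h+(e+1))
        have h2 := congrArg (fun p => p.coeff (e+1)) (wmT_rec i (n+(e+1)+1) h)
        have h3 := ih (n+1) (h+2)
        rw [show n + 1 + e + 1 = n+(e+1)+1 by ring] at h3
        have h4 : wmf' (2*i) (n+1) (h+2+e) = wmf (2*i) (n+1) (h+(e+1)) := by
          rw [wmf', if_neg (by omega)]; congr 1; omega
        rw [h4] at h3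
        rw [show h + (e+1) + 2 = h+2+(e+1) by ring] at h1
        simp only [sub_mul, coeff_X_mul, coeff_add, coeff_sub, one_mul, coeff_C_succ] at h2 ⊢
        linarith) h
    linarith

theorem wm_coeff_det (K e : ℕ) (M : Matrix (Fin (K+1)) (Fin (K+1)) ℤ[X]) (N : Matrix (Fin (K+1)) (Fin (K+1)) ℤ)
    (h1 : ∀ (j : Fin K) i, M j.castSucc i = C (N j.castSucc i))
    (h2 : ∀ i, (M (Fin.last K) i).coeff e = N (Fin.last K) i) : M.det.coeff e = N.det := by
  rw [Matrix.det_succ_row M (Fin.last K), Matrix.det_succ_row N (Fin.last K), finsetSum_coeff]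
  refine Finset.sum_congr rfl fun i _ => ?_
  have : M.submatrix (Fin.last K).succAbove i.succAbove =
      (N.submatrix (Fin.last K).succAbove i.succAbove).map C := by
    ext1 a b
    simp [h1]
  rw [this, ← RingHom.mapMatrix_apply, ← RingHom.map_det, coeff_mul_C]
  congr 1
  rw [← h2]
  have : ((-1 : ℤ[X]) ^ (↑(Fin.last K) + (i:ℕ))) = C ((-1)^(↑(Fin.last K) + (i:ℕ))) := by simp
  rw [this, coeff_C_mul]

theorem wm_alg (K T e y : ℕ) :
    (Matrix.det (Matrix.of fun (j i : Fin (K+1)) => wmF wmw (wmD ℤ[X] (2*(i:ℕ))) (T+e+1) (y+2*(j:ℕ)))).coeff e =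
    Matrix.det (Matrix.of fun (j i : Fin (K+1)) => 
      if j = Fin.last K then wmf' (2*(i:ℕ)) T (y+2*K+e) else wmf (2*(i:ℕ)) (T+e+1) (y+2*(j:ℕ))) := by
  have s1 : Matrix.det (Matrix.of fun (j i : Fin (K+1)) => wmT i (T+e+1) (y+2*(j:ℕ))) = 
     Matrix.det (Matrix.of fun (j i : Fin (K+1)) => wmF wmw (wmD ℤ[X] (2*(i:ℕ))) (T+e+1) (y+2*(j:ℕ))) := by
    apply Matrix.det_eq_of_forall_col_eq_smul_add_pred (fun _ => X - 1)
    · intro j; simp [wmT]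
    · intro j i; simp [wmT]
  have s2 : Matrix.det (Matrix.of fun (j i : Fin (K+1)) => wmT i (T+e+1) (y+2*(j:ℕ))) = 
     Matrix.det (Matrix.of fun (j i : Fin (K+1)) => if j = Fin.last K then wmT i (T+e+1) (y+2*(j:ℕ)) else 
        C (wmf (2*(i:ℕ)) (T+e+1) (y+2*(j:ℕ)))) := by
    rw [← Matrix.det_submatrix_equiv_self Fin.revPerm, ← Matrix.det_submatrix_equiv_self Fin.revPerm (Matrix.of fun (j i : Fin (K+1)) => if j = Fin.last K then wmT i (T+e+1) (y+2*(j:ℕ)) else 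
        C (wmf (2*(i:ℕ)) (T+e+1) (y+2*(j:ℕ))))]
    apply Matrix.det_eq_of_forall_row_eq_smul_add_pred (fun _ => X - 1)
    · intro i; simp
    · intro j i
      simp only [Matrix.submatrix_apply, Fin.revPerm_apply, Matrix.of_apply]
      rw [if_neg, wmT_rec]
      · have hh : y + 2 * ((Fin.rev j.succ : Fin (K+1)) : ℕ) + 2 = y + 2 * ((Fin.rev j.castSucc : Fin (K+1)) : ℕ) := by
          simp [Fin.val_rev]; omega
        rw [hh]
      · intro h
        have := congrArg Fin.val h
        simp [Fin.val_rev] at this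
        omega
  rw [← s1, s2]
  apply wm_coeff_det
  · intro j i
    have : j.castSucc ≠ Fin.last K := (Fin.castSucc_lt_last j).ne
    simp [this]
  · intro i
    simp [wmT_coeff]

/-- order constraint of the first family -/
def wmP1 (K : ℕ) (b : Fin (K+1) → ℕ) : Prop := StrictMono b

open Classical in
theorem wm_L (K x y e : ℕ) :
    (Nat.card {p : Fin (K+1) → Fin (x+1) → ℕ // IsWatermelon (K+1) x y p ∧
        Nat.card {t : Fin (x+1) // 1 ≤ (t : ℕ) ∧ p ⟨0, by omega⟩ t = 0} = e} : ℤ) =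
    (wmW (fun j : Fin (K+1) => 2*(j:ℕ))
      (fun _ b => (Fintype.piFinset (fun j => wmS (b j))).filter (wmP1 K))
      (fun b => ∏ j, wmw (b j)) x (fun j : Fin (K+1) => y + 2*(j:ℕ))).coeff e := by
  set nb : ℕ → (Fin (K+1) → ℕ) → Finset (Fin (K+1) → ℕ) :=
    (fun _ b => (Fintype.piFinset (fun j => wmS (b j))).filter (wmP1 K)) with hnb
  set a := (fun j : Fin (K+1) => 2*(j:ℕ)) with ha
  set v := (fun j : Fin (K+1) => y + 2*(j:ℕ)) with hv
  have hvm : StrictMono v := by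
    intro i j hij
    simp only [hv]
    have : (i:ℕ) < j := hij
    omega
  have hmono : ∀ p ∈ wmWalks a nb x v, ∀ t, StrictMono (p t) := by
    intro p hp t
    rw [wm_mem_walks] at hp
    refine Fin.lastCases ?_ (fun t => ?_) t
    · rw [hp.2.2]; exact hvm
    · have := hp.2.1 t
      simp only [hnb, Finset.mem_filter] at this
      exact this.2
  have hcost : ∀ p ∈ wmWalks a nb x v, (∏ t : Fin x, ∏ j, wmw (p t.succ j)) =
      X ^ (Nat.card {t : Fin (x+1) // 1 ≤ (t : ℕ) ∧ p t 0 = 0}) := by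
    intro p hp
    have h1 : ∀ t : Fin x, ∏ j, wmw (p t.succ j) = X ^ (if p t.succ 0 = 0 then 1 else 0) := by
      intro t
      rw [Finset.prod_eq_single 0]
      · simp only [wmw]; split_ifs <;> simp
      · intro j _ hj
        have := hmono p hp t.succ (Fin.pos_of_ne_zero hj)
        rw [wmw, if_neg (by omega)]
      · simp
    rw [Finset.prod_congr rfl (fun t _ => h1 t), Finset.prod_pow_eq_pow_sum]
    congr 1
    rw [Nat.card_eq_fintype_card, Fintype.card_subtype, Finset.card_filter, Fin.sum_univ_succ]
    simp
  unfold wmW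
  rw [Finset.sum_congr rfl hcost, finsetSum_coeff]
  simp only [coeff_X_pow]
  rw [Finset.sum_boole, ← Nat.card_eq_finsetCard]
  congr 1
  refine Nat.card_congr ((Equiv.piComm (fun (_ : Fin (K+1)) (_ : Fin (x+1)) => ℕ)).subtypeEquiv ?_)
  intro p
  rw [Finset.mem_filter, eq_comm (a := e)]
  refine and_congr ?_ Iff.rfl
  rw [wm_mem_walks]
  constructor
  · rintro ⟨h1, h2, h3⟩
    refine ⟨funext fun j => (h2 j).1, fun t => ?_, funext fun j => (h2 j).2⟩
    simp only [hnb, Finset.mem_filter, Fintype.mem_piFinset, wm_mem_S]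
    constructor
    · intro j
      have := h1 j t t.2
      exact this.symm
    · rw [wmP1, Fin.strictMono_iff_lt_succ]
      intro i
      exact h3 i.castSucc (by simp) _
  · intro hp
    have hm := hmono (Equiv.piComm (fun (_ : Fin (K+1)) (_ : Fin (x+1)) => ℕ) p) ((wm_mem_walks ..).2 hp)
    obtain ⟨h1, h2, h3⟩ := hp
    refine ⟨fun i t ht => ?_, fun i => ⟨congrFun h1 i, congrFun h3 i⟩, fun i hi t => ?_⟩
    · have := h2 ⟨t, ht⟩
      simp only [hnb, Finset.mem_filter, Fintype.mem_piFinset, wm_mem_S] at this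
      exact (this.1 i).symm
    · exact hm t (show i < ⟨(i:ℕ)+1, hi⟩ from Fin.lt_def.2 (Nat.lt_succ_self _))

open Classical in
theorem wm_L2 (K x y : ℕ) :
    wmW (fun j : Fin (K+1) => 2*(j:ℕ))
      (fun _ b => (Fintype.piFinset (fun j => wmS (b j))).filter (wmP1 K))
      (fun b => ∏ j, wmw (b j)) x (fun j : Fin (K+1) => y + 2*(j:ℕ)) = 
    Matrix.det (Matrix.of fun (j i : Fin (K+1)) => wmF wmw (wmD ℤ[X] (2*(i:ℕ))) x (y+2*(j:ℕ))) := by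
  refine wm_KM (fun j : Fin (K+1) => 2*(j:ℕ)) (fun _ _ => wmS) wmw (fun _ => wmP1 K)
    (fun _ b => ∀ i j, b i % 2 = b j % 2) (fun n _ h (i : Fin (K+1)) => wmF wmw (wmD ℤ[X] (2*(i:ℕ))) n h)
    ?_ ?_ ?_ x _ ?_ ?_
  · intro n j h
    funext i
    simp [wmF]
  · intro b hb _
    refine wm_det_delta (fun j : Fin (K+1) => 2*(j:ℕ)) b ?_ hb
    intro i j hij
    have : (i:ℕ) < j := hij
    simp only; omega
  · intro n b hb hQ b' hb'
    simp only [Fintype.mem_piFinset, wm_mem_S] at hb'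
    constructor
    · intro i j
      have := hb' i
      have := hb' j
      have := hQ i j
      omega
    · intro hP
      simp only [wmP1, StrictMono, not_forall] at hP
      obtain ⟨i, j, hij, hlt⟩ := hP
      have h1 := hb' i
      have h2 := hb' j
      have h3 := hQ i j
      have h4 := hb hij
      have : b' i = b' j := by omega
      apply Matrix.det_zero_of_row_eq hij.ne
      funext l
      simp [this]
  · intro i j hij
    have : (i:ℕ) < j := hij
    simp only; omega
  · intro i j
    omega

/-- steps of the second family -/
def wmS2 (K T n : ℕ) (j : Fin (K+1)) (h : ℕ) : Finset ℕ :=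
  if j = Fin.last K ∧ T ≤ n then {h} else wmS h

/-- order constraint of the second family -/
def wmP2 (K T n : ℕ) (b : Fin (K+1) → ℕ) : Prop :=
  (∀ i j, i < j → j ≠ Fin.last K → b i < b j) ∧ (n ≤ T → ∀ i, i ≠ Fin.last K → b i < b (Fin.last K))

open Classical in
theorem wm_R2 (K T s y c : ℕ) (hc : c + 3 = y + 2*(K+1) + s) :
    wmW (fun j : Fin (K+1) => 2*(j:ℕ))
      (fun n b => (Fintype.piFinset (fun j => wmS2 K T n j (b j))).filter (wmP2 K T n))
      (fun _ => ∏ _j : Fin (K+1), (1:ℤ)) (T+s+1) (fun j : Fin (K+1) => if j = Fin.last K then c else y + 2*(j:ℕ)) = 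
    Matrix.det (Matrix.of fun (j i : Fin (K+1)) => 
      if j = Fin.last K then wmf (2*(i:ℕ)) T c else wmf (2*(i:ℕ)) (T+s+1) (y+2*(j:ℕ))) := by
  have := wm_KM (R := ℤ) (fun j : Fin (K+1) => 2*(j:ℕ)) (wmS2 K T) (fun _ => 1) (wmP2 K T)
    (fun n b => (∀ i j, i ≠ Fin.last K → j ≠ Fin.last K → b i % 2 = b j % 2) ∧ 
       (∀ i, i ≠ Fin.last K → (b i + (n - T)) % 2 = b (Fin.last K) % 2) ∧
       (T < n → ∀ i, i ≠ Fin.last K → b i + (n - T) ≤ b (Fin.last K)))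
    (fun n j h (i : Fin (K+1)) => wmf (2*(i:ℕ)) (if j = Fin.last K then min n T else n) h)
    ?_ ?_ ?_ (T+s+1) (fun j : Fin (K+1) => if j = Fin.last K then c else y + 2*(j:ℕ)) ?_ ?_
  · rw [this]
    congr 1
    ext j i
    simp only [Matrix.of_apply]
    by_cases hj : j = Fin.last K
    · simp only [hj, if_true]; congr 1; omega
    · simp only [hj, if_false]
  · intro n j h
    funext i
    have hF : ∀ m, wmf (2*(i:ℕ)) (m+1) h = ∑ h' ∈ wmS h, wmf (2*(i:ℕ)) m h' := by
      intro m; simp [wmf, wmF]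
    simp only [one_smul, Finset.sum_apply, wmS2]
    by_cases hj : j = Fin.last K
    · by_cases hn : T ≤ n
      · simp [hj, hn, Nat.le_succ_of_le hn]
      · simp only [hj, hn, and_false, if_true, if_false]
        rw [min_eq_left (by omega), min_eq_left (by omega), hF]
    · simp only [hj, false_and, if_false]
      rw [hF]
  · intro b hb _
    have := wm_det_delta (R := ℤ) (fun j : Fin (K+1) => 2*(j:ℕ)) b ?_ ?_
    · rw [← this]
      congr 1
      ext j i
      simp [wmf, wmF]
    · intro i j hij
      have : (i:ℕ) < j := hij
      simp only; omega
    · intro i j hij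
      by_cases hj : j = Fin.last K
      · subst hj; exact hb.2 (by omega) i hij.ne
      · exact hb.1 i j hij hj
  · rintro n b hb ⟨q1, q2, q3⟩ b' hb'
    simp only [Fintype.mem_piFinset] at hb'
    have hm : ∀ j, j ≠ Fin.last K → (b' j = b j + 1 ∨ b j = b' j + 1) := by
      intro j hj
      have := hb' j
      simpa [wmS2, hj, wm_mem_S] using this
    have hl := hb' (Fin.last K)
    simp only [wmS2, true_and] at hl
    refine ⟨⟨?_, ?_, ?_⟩, ?_⟩
    · intro i j hi hj
      have := hm i hi
      have := hm j hj
      have := q1 i j hi hj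
      omega
    · intro i hi
      have := hm i hi
      have := q2 i hi
      split_ifs at hl
      · simp at hl; omega
      · rw [wm_mem_S] at hl; omega
    · intro hT i hi
      have := hm i hi
      have := q3 (by omega) i hi
      split_ifs at hl
      · simp at hl; omega
      · omega
    · intro hP
      simp only [wmP2, not_and_or, not_forall] at hP
      rcases hP with ⟨i, j, hij, hj, hlt⟩ | ⟨hn, i, hi, hlt⟩
      · have hi : i ≠ Fin.last K := (lt_of_lt_of_le hij (Fin.le_last j)).ne
        have h1 := hm i hi
        have h2 := hm j hj
        have h3 := q1 i j hi hj
        have h4 := hb.1 i j hij hj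
        have : b' i = b' j := by omega
        apply Matrix.det_zero_of_row_eq hij.ne
        funext l
        simp [this, hi, hj]
      · have h1 := hm i hi
        have h2 := q2 i hi
        have : b' i = b' (Fin.last K) := by
          split_ifs at hl
          · simp at hl
            have := q3 (by omega) i hi
            omega
          · rw [wm_mem_S] at hl
            have := hb.2 (by omega) i hi
            omega
        apply Matrix.det_zero_of_row_eq hi
        funext l
        simp [this, hn]
  · refine ⟨?_, by omega⟩
    intro i j hij hj
    have hi : i ≠ Fin.last K := (lt_of_lt_of_le hij (Fin.le_last j)).ne
    have : (i:ℕ) < j := hij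
    simp only [hi, hj, if_false]; omega
  · refine ⟨?_, ?_, ?_⟩
    · intro i j hi hj
      simp only [hi, hj, if_false]; omega
    · intro i hi
      simp only [hi, if_false, if_true]; omega
    · intro _ i hi
      have := i.2
      have h2 : (i:ℕ) ≠ K := fun h => hi (Fin.ext h)
      simp only [hi, if_false, if_true]; omega

theorem wm_adj {m : ℕ} (f : Fin m → ℕ) (h : ∀ (i : Fin m) (hi : (i:ℕ)+1 < m), f i < f ⟨(i:ℕ)+1, hi⟩) :
    StrictMono f := by
  rcases m with _ | m
  · intro i; exact i.elim0
  · rw [Fin.strictMono_iff_lt_succ]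
    intro i
    exact h i.castSucc (by simp)

open Classical in
theorem wm_R (K x y e c : ℕ) (he : e + 1 ≤ x) (hc : c + 3 = y + 2*(K+1) + e) :
    (Nat.card {q : (Fin K → Fin (x+1) → ℕ) × (Fin (x-e) → ℕ) //
        IsWatermelon K x y q.1 ∧
        (∀ (t : ℕ) (ht : t + 1 < x - e),
          q.2 ⟨t + 1, ht⟩ = q.2 ⟨t, by omega⟩ + 1 ∨
          q.2 ⟨t, by omega⟩ = q.2 ⟨t + 1, ht⟩ + 1) ∧
        q.2 ⟨0, by omega⟩ = 2 * K ∧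
        q.2 ⟨x - e - 1, by omega⟩ + 3 = y + 2 * (K+1) + e ∧
        (∀ (hk2 : 2 ≤ K+1) (t : Fin (x-e)),
          q.1 ⟨K + 1 - 2, by omega⟩ ⟨(t : ℕ), by have := t.isLt; omega⟩ < q.2 t)} : ℤ) = 
    wmW (fun j : Fin (K+1) => 2*(j:ℕ))
      (fun n b => (Fintype.piFinset (fun j => wmS2 K (x-e-1) n j (b j))).filter (wmP2 K (x-e-1) n))
      (fun _ => ∏ _j : Fin (K+1), (1:ℤ)) x (fun j : Fin (K+1) => if j = Fin.last K then c else y + 2*(j:ℕ)) := by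
  unfold wmW
  simp only [Finset.prod_const_one, Finset.sum_const, nsmul_eq_mul, mul_one]
  rw [← Nat.card_eq_finsetCard]
  congr 1
  have hlt : ∀ j : Fin (K+1), j ≠ Fin.last K → (j:ℕ) < K := by
    intro j hj
    have := j.2
    have h2 : (j:ℕ) ≠ K := fun h => hj (Fin.ext h)
    omega
  refine Nat.card_congr
    { toFun := fun q => ⟨fun t j => if h : j = Fin.last K then q.1.2 ⟨min t (x-e-1), by omega⟩ else q.1.1 ⟨j, hlt j h⟩ t, ?_⟩
      invFun := fun p => ⟨(fun j t => p.1 t j.castSucc, fun t => p.1 ⟨t, by omega⟩ (Fin.last K)), ?_⟩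
      left_inv := ?_
      right_inv := ?_ }
  · obtain ⟨⟨q1, q2⟩, ⟨w1, w2, w3⟩, h1, h2, h3, h4⟩ := q
    simp only at h1 h2 h3 h4 w1 w2 w3 ⊢
    have hmono : ∀ t, StrictMono (fun j => q1 j t) := fun t => wm_adj _ (fun i hi => w3 i hi t)
    rw [wm_mem_walks]
    refine ⟨?_, ?_, ?_⟩
    · funext j
      by_cases hj : j = Fin.last K
      · subst hj; simpa using h2
      · simp only [hj, dif_neg, not_false_eq_true]
        exact (w2 ⟨j, hlt j hj⟩).1
    · intro t
      simp only [Finset.mem_filter, Fintype.mem_piFinset]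
      refine ⟨fun j => ?_, ?_, ?_⟩
      · by_cases hj : j = Fin.last K
        · subst hj
          simp only [wmS2, true_and, dif_pos]
          split_ifs with hT
          · simp only [Finset.mem_singleton]
            congr 2
            simp; omega
          · rw [wm_mem_S]
            have := h1 t (by omega)
            have e1 : min ((t.castSucc : Fin (x+1)) : ℕ) (x-e-1) = t := by simp; omega
            have e2 : min ((t.succ : Fin (x+1)) : ℕ) (x-e-1) = t+1 := by simp; omega
            simp only [e1, e2]
            exact this.symm
        · simp only [wmS2, hj, false_and, if_false, dif_neg, not_false_eq_true]
          rw [wm_mem_S]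
          exact (w1 ⟨j, hlt j hj⟩ t t.2).symm
      · intro i j hij hj
        have hi : i ≠ Fin.last K := (lt_of_lt_of_le hij (Fin.le_last j)).ne
        simp only [hi, hj, dif_neg, not_false_eq_true]
        exact hmono _ (Fin.lt_def.2 hij)
      · intro hn i hi
        have hiK := hlt i hi
        simp only [hi, dif_neg, dif_pos, not_false_eq_true]
        have e1 : min ((t.castSucc : Fin (x+1)) : ℕ) (x-e-1) = t := by simp; omega
        simp only [e1]
        refine lt_of_le_of_lt ?_ (h4 (by omega) ⟨t, by omega⟩)
        exact (hmono t.castSucc).monotone (Fin.le_def.2 (by simp; omega))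
    · funext j
      by_cases hj : j = Fin.last K
      · subst hj
        have e1 : min ((Fin.last x : Fin (x+1)) : ℕ) (x-e-1) = x-e-1 := by simp; omega
        simp only [e1, dif_pos, if_true]
        omega
      · simp only [hj, dif_neg, if_false, not_false_eq_true]
        exact (w2 ⟨j, hlt j hj⟩).2
  · obtain ⟨p, hp⟩ := p
    rw [wm_mem_walks] at hp
    obtain ⟨h1, h2, h3⟩ := hp
    simp only [Finset.mem_filter, Fintype.mem_piFinset] at h2
    have hne : ∀ j : Fin K, j.castSucc ≠ Fin.last K := fun j => (Fin.castSucc_lt_last j).ne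
    refine ⟨⟨?_, ?_, ?_⟩, ?_, ?_, ?_, ?_⟩
    · intro i t ht
      have := (h2 ⟨t, ht⟩).1 i.castSucc
      simp only [wmS2, hne, false_and, if_false, wm_mem_S] at this
      exact this.symm
    · intro i
      have a1 := congrFun h1 i.castSucc
      have a2 := congrFun h3 i.castSucc
      simp only [hne, if_false] at a2
      exact ⟨a1, a2⟩
    · intro i hi t
      refine Fin.lastCases ?_ (fun t => ?_) t
      · simp only [h3, hne, if_false]
        simp
      · exact (h2 t).2.1 i.castSucc (Fin.castSucc ⟨(i:ℕ)+1, hi⟩) (Fin.lt_def.2 (by simp)) (hne _)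
    · intro t ht
      have := (h2 ⟨t, by omega⟩).1 (Fin.last K)
      rw [wmS2, if_neg (by simp; omega), wm_mem_S] at this
      exact this.symm
    · exact congrFun h1 (Fin.last K)
    · have key : ∀ m (hm : m < x + 1), x - e - 1 ≤ m → p ⟨m, hm⟩ (Fin.last K) = p ⟨x-e-1, by omega⟩ (Fin.last K) := by
        intro m hm hle
        induction m, hle using Nat.le_induction with
        | base => rfl
        | succ m hle ih =>
          rw [← ih (by omega)]
          have := (h2 ⟨m, by omega⟩).1 (Fin.last K)
          rw [wmS2, if_pos (by simp; omega), Finset.mem_singleton] at this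
          exact this.symm
      have a1 := key x (by omega) (by omega)
      have a2 := congrFun h3 (Fin.last K)
      simp only [if_true] at a2
      rw [← hc]
      exact congrArg (· + 3) (a1.symm.trans a2)
    · intro hk t
      have := t.2
      exact (h2 ⟨t, by omega⟩).2.2 (by simp; omega) (Fin.castSucc ⟨K+1-2, by omega⟩) (hne _)
  · rintro ⟨⟨q1, q2⟩, hq⟩
    apply Subtype.ext
    refine Prod.ext ?_ ?_
    · funext j t
      have : j.castSucc ≠ Fin.last K := (Fin.castSucc_lt_last j).ne
      simp [this]
    · funext t
      have := t.2
      have e1 : min (t : ℕ) (x-e-1) = t := by omega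
      simp [e1]
  · rintro ⟨p, hp⟩
    apply Subtype.ext
    funext t j
    rw [wm_mem_walks] at hp
    obtain ⟨h1, h2, h3⟩ := hp
    simp only [Finset.mem_filter, Fintype.mem_piFinset] at h2
    by_cases hj : j = Fin.last K
    · subst hj
      simp only [dif_pos]
      have key : ∀ m (hm : m < x + 1), x - e - 1 ≤ m → p ⟨m, hm⟩ (Fin.last K) = p ⟨x-e-1, by omega⟩ (Fin.last K) := by
        intro m hm hle
        induction m, hle using Nat.le_induction with
        | base => rfl
        | succ m hle ih =>
          rw [← ih (by omega)]
          have := (h2 ⟨m, by omega⟩).1 (Fin.last K)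
          rw [wmS2, if_pos (by simp; omega), Finset.mem_singleton] at this
          exact this.symm
      by_cases ht : (t:ℕ) ≤ x-e-1
      · congr 1
        apply Fin.ext
        exact min_eq_left ht
      · have := key t t.2 (by omega)
        rw [show p t (Fin.last K) = p ⟨t, t.2⟩ (Fin.last K) from rfl, this]
        congr 1
        apply Fin.ext
        exact min_eq_right (by omega)
    · simp [hj]
/-- Brak–Essam: watermelon configurations of `k` paths of length `x` and
deviation `y` whose bottom path has exactly `e` returns are equinumerous with
families where the lower `k−1` paths form a watermelon configuration of length
`x` and deviation `y` and the top path ends at `(x−e−1, y+2k+e−3)`. -/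
theorem stmt14 (k x y e : ℕ) (hk : 1 ≤ k) (he : e + 1 ≤ x) :
    Nat.card {p : Fin k → Fin (x+1) → ℕ // IsWatermelon k x y p ∧
        Nat.card {t : Fin (x+1) // 1 ≤ (t : ℕ) ∧ p ⟨0, by omega⟩ t = 0} = e}
    = Nat.card {q : (Fin (k-1) → Fin (x+1) → ℕ) × (Fin (x-e) → ℕ) //
        IsWatermelon (k-1) x y q.1 ∧
        (∀ (t : ℕ) (ht : t + 1 < x - e),
          q.2 ⟨t + 1, ht⟩ = q.2 ⟨t, by omega⟩ + 1 ∨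
          q.2 ⟨t, by omega⟩ = q.2 ⟨t + 1, ht⟩ + 1) ∧
        q.2 ⟨0, by omega⟩ = 2 * (k - 1) ∧
        q.2 ⟨x - e - 1, by omega⟩ + 3 = y + 2 * k + e ∧
        (∀ (hk2 : 2 ≤ k) (t : Fin (x-e)),
          q.1 ⟨k - 2, by omega⟩ ⟨(t : ℕ), by have := t.isLt; omega⟩ < q.2 t)} := by
  obtain ⟨K, rfl⟩ : ∃ K, k = K + 1 := ⟨k - 1, by omega⟩
  obtain ⟨T, hT⟩ : ∃ T, T = x - e - 1 := ⟨_, rfl⟩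
  have hx : x = T + e + 1 := by omega
  have hL := wm_L K x y e
  rw [wm_L2] at hL
  have hA := wm_alg K T e y
  rw [← hx] at hA
  rw [hA] at hL
  by_cases hc : 3 ≤ y + 2 * (K+1) + e
  · obtain ⟨c, hc'⟩ : ∃ c, c + 3 = y + 2 * (K+1) + e := ⟨y + 2 * (K+1) + e - 3, by omega⟩
    have hR := wm_R K x y e c he hc'
    have hR2 := wm_R2 K T e y c hc'
    rw [← hx, hT] at hR2
    rw [hR2] at hR
    have hcf : ∀ i : ℕ, wmf' (2 * i) T (y + 2 * K + e) = wmf (2 * i) T c := by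
      intro i
      rw [wmf', if_neg (by omega)]
      congr 1; omega
    simp only [hcf] at hL
    rw [hT] at hL
    have := hL.trans hR.symm
    exact_mod_cast this
  · have hz : (Matrix.det (Matrix.of fun (j i : Fin (K+1)) => 
      if j = Fin.last K then wmf' (2*(i:ℕ)) T (y+2*K+e) else wmf (2*(i:ℕ)) x (y+2*(j:ℕ)))) = 0 := by
      apply Matrix.det_eq_zero_of_row_eq_zero (Fin.last K)
      intro i
      simp only [Matrix.of_apply, if_true, wmf']
      rw [if_pos (by omega)]
    rw [hz] at hL
    refine (Nat.cast_eq_zero.1 hL).trans ?_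
    symm
    rw [Nat.card_eq_zero]
    left
    refine ⟨fun q => ?_⟩
    have := q.2.2.2.2.1
    omega
end

section
/- Assume y ≥ 1, k ≥ 1, T j = y for all j ∈ Fin x (the boundary T = N^y E^x), and B j < y for all j ∈ Fin x (so that the Young diagram λ(T,B) has first row λ_1 = x). Then for all natural numbers h_0,…,h_k and u_1,…,u_{y−1}, the number of tuples P ∈ P^k(T,B) with h_i(P) = h_i for all 0 ≤ i ≤ k and u_s(P) = u_s for all 1 ≤ s ≤ y−1 equals the number of k-flagged semistandard Young tableaux of shape λ(T,B) whose weight μ satisfies μ_i + h_{i−1} = x for 1 ≤ i ≤ k+1 and μ_{k+1+s} = u_s for 1 ≤ s ≤ y−1 (and μ_i = 0 for all i > k+y). -/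
/-- A path `P` lies in `P(T,B)`: it is weakly increasing (monotone) and lies
weakly between the boundaries `B` and `T`. -/
def InP {x y : ℕ} (T B P : Fin x → Fin (y+1)) : Prop :=
  Monotone P ∧ ∀ j, B j ≤ P j ∧ P j ≤ T j

/-- A `k`-tuple of paths lies in `P^k(T,B)`: every path lies in `P(T,B)` and
each path lies weakly above the next one. -/
def InPk {x y k : ℕ} (T B : Fin x → Fin (y+1)) (P : Fin k → Fin x → Fin (y+1)) : Prop :=
  (∀ i, InP T B (P i)) ∧
  ∀ (i : Fin k) (hi : (i : ℕ) + 1 < k) (j : Fin x), P ⟨(i : ℕ) + 1, hi⟩ j ≤ P i j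

/-- The extended tuple, with the conventions `P_0 = T` and `P_{k+1} = B`. -/
def extP {x y k : ℕ} (T B : Fin x → Fin (y+1)) (P : Fin k → Fin x → Fin (y+1))
    (i : Fin (k+2)) : Fin x → Fin (y+1) :=
  if h0 : (i : ℕ) = 0 then T
  else if hk1 : (i : ℕ) = k + 1 then B
  else P ⟨(i : ℕ) - 1, by have := i.isLt; omega⟩

/-- `hstat T B P i` is the number of east steps shared by `P_i` and `P_{i+1}`. -/
noncomputable def hstat {x y k : ℕ} (T B : Fin x → Fin (y+1))
    (P : Fin k → Fin x → Fin (y+1)) (i : Fin (k+1)) : ℕ :=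
  Nat.card {j : Fin x // extP T B P i.castSucc j = extP T B P i.succ j}

/-- `ustat T B P s` (for `s : Fin (y-1)` representing `s+1 ∈ {1,…,y-1}`) is the
number of east steps at height `y-(s+1)` lying strictly between `T` and `B`
that are used by none of the paths of `P`. -/
noncomputable def ustat {x y k : ℕ} (T B : Fin x → Fin (y+1))
    (P : Fin k → Fin x → Fin (y+1)) (s : Fin (y-1)) : ℕ :=
  Nat.card {j : Fin x // (B j : ℕ) < y - ((s : ℕ) + 1) ∧ y - ((s : ℕ) + 1) < (T j : ℕ) ∧
      ∀ i : Fin k, (P i j : ℕ) ≠ y - ((s : ℕ) + 1)}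

/-- `lam B r` is the length of row `r+1` (rows numbered `1,…,y` from the top) of
the Young diagram `λ(T,B)` bounded by `T = N^y E^x` and `B`. -/
noncomputable def lam {x y : ℕ} (B : Fin x → Fin (y+1)) (r : Fin y) : ℕ :=
  Nat.card {j : Fin x // (B j : ℕ) ≤ y - ((r : ℕ) + 1)}

/-- A `k`-flagged semistandard Young tableau of shape `λ(T,B)`, encoded as a
function on the `y × x` grid: entries inside the diagram are positive, at most
`k + row`, weakly increasing along rows and strictly increasing down columns;
entries outside the diagram are normalized to `0`. -/
def IsFlaggedSSYT {x y : ℕ} (k : ℕ) (B : Fin x → Fin (y+1)) (S : Fin y → Fin x → ℕ) : Prop :=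
  (∀ (r : Fin y) (c : Fin x), (c : ℕ) < lam B r → 1 ≤ S r c ∧ S r c ≤ k + (r : ℕ) + 1) ∧
  (∀ (r : Fin y) (c c' : Fin x), c ≤ c' → (c' : ℕ) < lam B r → S r c ≤ S r c') ∧
  (∀ (r r' : Fin y) (c : Fin x), (r : ℕ) + 1 = (r' : ℕ) → (c : ℕ) < lam B r' → S r c < S r' c) ∧
  (∀ (r : Fin y) (c : Fin x), lam B r ≤ (c : ℕ) → S r c = 0)

/-- `wt B S i` is the number of entries of the tableau `S` equal to `i`
(the `i`-th component of the weight of `S`). -/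
noncomputable def wt {x y : ℕ} (B : Fin x → Fin (y+1)) (S : Fin y → Fin x → ℕ) (i : ℕ) : ℕ :=
  Nat.card {rc : Fin y × Fin x // ((rc.2 : ℕ) < lam B rc.1) ∧ S rc.1 rc.2 = i}


namespace FS

open Finset

/-- partitions with at most `y` rows and row lengths at most `x` -/
abbrev Sh (x y : ℕ) := {f : Fin y → Fin (x+1) // Antitone f}

noncomputable instance (x y : ℕ) : Fintype (Sh x y) := Fintype.ofFinite _
noncomputable instance (x y : ℕ) : DecidableEq (Sh x y) := Classical.decEq _

def g {x y : ℕ} (f : Sh x y) (r : ℕ) : ℕ := if h : r < y then (f.1 ⟨r, h⟩ : ℕ) else 0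

lemma g_anti {x y : ℕ} (f : Sh x y) : Antitone (g f) := by
  intro a b hab
  unfold g
  split_ifs with h1 h2
  · exact f.2 (show (⟨a, h2⟩ : Fin y) ≤ ⟨b, h1⟩ from hab)
  · omega
  · omega
  · omega

lemma g_le {x y : ℕ} (f : Sh x y) (r : ℕ) : g f r ≤ x := by
  unfold g
  split_ifs with h1
  · have := (f.1 ⟨r, h1⟩).isLt; omega
  · omega

lemma g_ge {x y : ℕ} (f : Sh x y) (r : ℕ) (h : y ≤ r) : g f r = 0 := by
  unfold g
  rw [dif_neg (by omega)]

lemma g_ext {x y : ℕ} {f f' : Sh x y} (h : ∀ r, r < y → g f r = g f' r) : f = f' := by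
  apply Subtype.ext
  funext r
  apply Fin.ext
  have := h r r.isLt
  simpa [g] using this

def sh0 (x y : ℕ) : Sh x y := ⟨fun _ => 0, fun _ _ _ => le_rfl⟩

lemma g_sh0 {x y : ℕ} (r : ℕ) : g (sh0 x y) r = 0 := by
  simp [g, sh0]

open Classical in
noncomputable def ofFun (x y : ℕ) (φ : ℕ → ℕ) : Sh x y :=
  if h : (∀ r, φ (r+1) ≤ φ r) ∧ ∀ r, φ r ≤ x then
    ⟨fun r => ⟨φ r, Nat.lt_succ_of_le (h.2 r)⟩, fun a b hab =>
      antitone_nat_of_succ_le h.1 (show (a : ℕ) ≤ b from hab)⟩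
  else sh0 x y

lemma g_ofFun {x y : ℕ} (φ : ℕ → ℕ) (h1 : ∀ r, φ (r+1) ≤ φ r) (h2 : ∀ r, φ r ≤ x)
    (r : ℕ) : g (ofFun x y φ) r = if r < y then φ r else 0 := by
  unfold ofFun
  rw [dif_pos ⟨h1, h2⟩]
  unfold g
  split_ifs <;> rfl

variable {R : Type*} [CommSemiring R]

open Classical in
noncomputable def U {x y : ℕ} (s : ℕ) (w : R) : Matrix (Sh x y) (Sh x y) R := fun κ l =>
  if (∀ r, r < s → g l r = g κ r) ∧ (∀ r, g κ r ≤ g l r ∧ g l (r+1) ≤ g κ r)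
  then w ^ (∑ r ∈ range y, (g l r - g κ r)) else 0

open Classical in
noncomputable def V {x y : ℕ} (s : ℕ) (z : R) (u : ℕ → R) : Matrix (Sh x y) (Sh x y) R := fun κ l =>
  if (∀ r, g κ r ≤ g l r) ∧ (∀ r, s ≤ r → g l (r+1) ≤ g κ r)
  then ∏ r ∈ range y, (u (r+1) ^ (max (g κ r) (g l (r+1)) - g κ r) *
      z ^ (g l r - max (g κ r) (g l (r+1)))) else 0

/-- the row-wise toggle -/
def tog (κ l ρ : ℕ → ℕ) (r : ℕ) : ℕ :=
  max (κ r) (l (r+1)) + min (l r) (κ (r-1)) - ρ r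

lemma tele (s : ℕ) (κ l ρ ρ' : ℕ → ℕ) (n : ℕ) (hn : s + 1 ≤ n)
    (h : ∀ r, s + 1 ≤ r → κ r ≤ ρ r ∧ ρ r ≤ l r ∧ l (r+1) ≤ ρ r ∧ ρ r ≤ κ (r-1))
    (h' : ∀ r, s + 1 ≤ r → ρ' r + ρ r = max (κ r) (l (r+1)) + min (l r) (κ (r-1))) :
    ∑ r ∈ Ico (s+1) n, (ρ' r - κ r) + (max (κ s) (l (s+1)) - κ s)
      = ∑ r ∈ Ico (s+1) n, (l r - ρ r) + (max (κ (n-1)) (l n) - κ (n-1)) ∧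
    ∑ r ∈ Ico (s+1) n, (l r - ρ' r) + (max (κ (n-1)) (l n) - κ (n-1))
      = ∑ r ∈ Ico (s+1) n, (ρ r - κ r) + (max (κ s) (l (s+1)) - κ s) := by
  induction n, hn using Nat.le_induction with
  | base => simp
  | succ n hn ih =>
    rw [sum_Ico_succ_top hn, sum_Ico_succ_top hn, sum_Ico_succ_top hn, sum_Ico_succ_top hn]
    have a := h n hn
    have b := h' n hn
    simp only [Nat.add_sub_cancel] at *
    omega

lemma range_split {M : Type*} [CommMonoid M] (f : ℕ → M) (t y : ℕ) (h : t < y) :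
    ∏ r ∈ range y, f r = (∏ r ∈ range t, f r) * f t * ∏ r ∈ Ico (t+1) y, f r := by
  rw [← prod_range_succ, prod_range_mul_prod_Ico _ (by omega)]

lemma wt_eq {x y : ℕ} (t : ℕ) (z : R) (u : ℕ → R) (ht : t < y) (κ l ρ ρ' : ℕ → ℕ)
    (hl : l y = 0)
    (h0 : ∀ r, r < t + 1 → ρ r = κ r) (h0' : ∀ r, r < t + 1 → ρ' r = l r)
    (h : ∀ r, t + 1 ≤ r → κ r ≤ ρ r ∧ ρ r ≤ l r ∧ l (r+1) ≤ ρ r ∧ ρ r ≤ κ (r-1))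
    (hκl : ∀ r, κ r ≤ l r) (hl1 : ∀ r, l (r+1) ≤ l r)
    (h' : ∀ r, t + 1 ≤ r → ρ' r + ρ r = max (κ r) (l (r+1)) + min (l r) (κ (r-1))) :
    u (t+1) ^ (∑ r ∈ range y, (ρ r - κ r)) *
      (∏ r ∈ range y, (u (r+1) ^ (max (ρ r) (l (r+1)) - ρ r) *
      z ^ (l r - max (ρ r) (l (r+1)))))
    = (∏ r ∈ range y, (u (r+1) ^ (max (κ r) (ρ' (r+1)) - κ r) *
      z ^ (ρ' r - max (κ r) (ρ' (r+1))))) * u (t+1) ^ (∑ r ∈ range y, (l r - ρ' r)) := by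
  obtain ⟨e1, e2⟩ := tele t κ l ρ ρ' y ht h h'
  rw [← prod_pow_eq_pow_sum, ← prod_pow_eq_pow_sum]
  rw [range_split _ t y ht, range_split _ t y ht, range_split _ t y ht, range_split _ t y ht]
  have a1 : ∏ r ∈ range t, u (t+1) ^ (ρ r - κ r) = 1 := prod_eq_one fun r hr => by
    rw [h0 r (by simp at hr; omega)]; simp
  have a2 : ∏ r ∈ range t, u (t+1) ^ (l r - ρ' r) = 1 := prod_eq_one fun r hr => by
    rw [h0' r (by simp at hr; omega)]; simp
  have a3 : ∏ r ∈ range t, (u (r+1) ^ (max (ρ r) (l (r+1)) - ρ r) *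
      z ^ (l r - max (ρ r) (l (r+1)))) = ∏ r ∈ range t, (u (r+1) ^ (max (κ r) (ρ' (r+1)) - κ r) *
      z ^ (ρ' r - max (κ r) (ρ' (r+1)))) := prod_congr rfl fun r hr => by
    simp at hr
    rw [h0 r (by omega), h0' r (by omega), h0' (r+1) (by omega)]
  have a4 : ∏ r ∈ Ico (t+1) y, (u (r+1) ^ (max (ρ r) (l (r+1)) - ρ r) *
      z ^ (l r - max (ρ r) (l (r+1)))) = ∏ r ∈ Ico (t+1) y, z ^ (l r - ρ r) :=
    prod_congr rfl fun r hr => by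
      simp at hr
      rw [max_eq_left (h r (by omega)).2.2.1]; simp
  have key : ∀ r, t ≤ r → ρ' (r+1) ≤ κ r := fun r hr => by
    have := h (r+1) (by omega)
    have := h' (r+1) (by omega)
    simp only [Nat.add_sub_cancel] at *
    omega
  have a5 : ∏ r ∈ Ico (t+1) y, (u (r+1) ^ (max (κ r) (ρ' (r+1)) - κ r) *
      z ^ (ρ' r - max (κ r) (ρ' (r+1)))) = ∏ r ∈ Ico (t+1) y, z ^ (ρ' r - κ r) :=
    prod_congr rfl fun r hr => by
      simp at hr
      rw [max_eq_left (key r (by omega))]; simp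
  rw [a1, a2, a3, a4, a5, h0 t (by omega), max_eq_left (key t le_rfl), h0' t (by omega)]
  simp only [prod_pow_eq_pow_sum, Nat.sub_self, pow_zero, one_mul, mul_one]
  set P := ∏ r ∈ range t, (u (r+1) ^ (max (κ r) (ρ' (r+1)) - κ r) *
      z ^ (ρ' r - max (κ r) (ρ' (r+1))))
  rw [hl] at e1 e2
  simp only [Nat.zero_le, sup_of_le_left, Nat.sub_self, add_zero] at e1 e2
  rw [← e1, e2]
  have b1 : l t - κ t = (l t - max (κ t) (l (t+1))) + (max (κ t) (l (t+1)) - κ t) := by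
    have := hκl t
    have := hl1 t
    omega
  rw [b1]
  simp only [pow_add]
  ring

lemma sum_ite_mul {A : Type*} [Fintype A] (P Q : A → Prop) [DecidablePred P] [DecidablePred Q]
    [DecidablePred fun a => P a ∧ Q a]
    (a b : A → R) : ∑ ρ, (if P ρ then a ρ else 0) * (if Q ρ then b ρ else 0)
      = ∑ ρ ∈ univ.filter (fun ρ => P ρ ∧ Q ρ), a ρ * b ρ := by
  rw [sum_filter]
  refine sum_congr rfl fun ρ _ => ?_
  by_cases h : P ρ <;> by_cases h' : Q ρ <;> simp [h, h']

lemma comm {x y : ℕ} (t : ℕ) (z : R) (u : ℕ → R) (ht : t < y) :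
    (U (t+1) (u (t+1)) * V (t+1) z u : Matrix (Sh x y) (Sh x y) R) = V t z u * U (t+1) (u (t+1)) := by
  classical
  ext κ l
  rw [Matrix.mul_apply, Matrix.mul_apply]
  unfold U V
  rw [sum_ite_mul, sum_ite_mul]
  have hκ : ∀ r, g κ (r+1) ≤ g κ r := fun r => g_anti κ (by omega)
  have hl : ∀ r, g l (r+1) ≤ g l r := fun r => g_anti l (by omega)
  have hκx := g_le κ
  have hlx := g_le l
  have hκy := g_ge κ
  have hly := g_ge l
  let f1 : (ℕ → ℕ) → ℕ → ℕ := fun ρ r => if r < t + 1 then g l r else tog (g κ) (g l) ρ r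
  let f2 : (ℕ → ℕ) → ℕ → ℕ := fun ρ r => if r < t + 1 then g κ r else tog (g κ) (g l) ρ r
  -- interval facts on the two sides
  have hL : ∀ ρ : Sh x y, (((∀ r, r < t+1 → g ρ r = g κ r) ∧ (∀ r, g κ r ≤ g ρ r ∧ g ρ (r+1) ≤ g κ r)) ∧
      (∀ r, g ρ r ≤ g l r) ∧ (∀ r, t+1 ≤ r → g l (r+1) ≤ g ρ r)) →
      (∀ r, g κ r ≤ g l r) ∧ (∀ r, t + 1 ≤ r → g κ r ≤ g ρ r ∧ g ρ r ≤ g l r ∧ g l (r+1) ≤ g ρ r ∧ g ρ r ≤ g κ (r-1)) := by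
    rintro ρ ⟨⟨h1, h2⟩, h3, h4⟩
    refine ⟨fun r => (h2 r).1.trans (h3 r), fun r hr => ⟨(h2 r).1, h3 r, h4 r hr, ?_⟩⟩
    have := (h2 (r-1)).2
    rwa [Nat.sub_add_cancel (by omega)] at this
  have hR : ∀ ρ : Sh x y, (((∀ r, g κ r ≤ g ρ r) ∧ (∀ r, t ≤ r → g ρ (r+1) ≤ g κ r)) ∧
      (∀ r, r < t+1 → g l r = g ρ r) ∧ (∀ r, g ρ r ≤ g l r ∧ g l (r+1) ≤ g ρ r)) →
      (∀ r, g κ r ≤ g l r) ∧ (∀ r, t + 1 ≤ r → g κ r ≤ g ρ r ∧ g ρ r ≤ g l r ∧ g l (r+1) ≤ g ρ r ∧ g ρ r ≤ g κ (r-1)) := by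
    rintro ρ ⟨⟨h1, h2⟩, h3, h4⟩
    refine ⟨fun r => (h1 r).trans (h4 r).1, fun r hr => ⟨h1 r, (h4 r).1, (h4 r).2, ?_⟩⟩
    have := (h2 (r-1)) (by omega)
    rwa [Nat.sub_add_cancel (by omega)] at this
  have G1 : ∀ ρ : Sh x y, (∀ r, g κ r ≤ g l r) → (∀ r, t + 1 ≤ r → g κ r ≤ g ρ r ∧ g ρ r ≤ g l r ∧ g l (r+1) ≤ g ρ r ∧ g ρ r ≤ g κ (r-1)) →
      ∀ r, g (ofFun x y (f1 (g ρ))) r = f1 (g ρ) r := by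
    intro ρ hkl h r
    rw [g_ofFun]
    · split_ifs with hr
      · rfl
      · have := hκy r (by omega)
        have := hly r (by omega)
        have := hly (r+1) (by omega)
        simp only [f1, tog]
        split_ifs <;> omega
    · intro r
      have a1 := hκ r
      have a2 := hl r
      have a3 := hkl (r+1)
      have a4 := hkl r
      have b := h r
      have b' := h (r+1)
      simp only [f1, tog, Nat.add_sub_cancel] at *
      split_ifs <;> omega
    · intro r
      have a1 := hκx r
      have a2 := hlx r
      have a4 := hkl r
      have a5 := hlx (r+1)
      have a6 := hl r
      have b := h r
      simp only [f1, tog] at *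
      split_ifs <;> omega
  have G2 : ∀ ρ : Sh x y, (∀ r, g κ r ≤ g l r) → (∀ r, t + 1 ≤ r → g κ r ≤ g ρ r ∧ g ρ r ≤ g l r ∧ g l (r+1) ≤ g ρ r ∧ g ρ r ≤ g κ (r-1)) →
      ∀ r, g (ofFun x y (f2 (g ρ))) r = f2 (g ρ) r := by
    intro ρ hkl h r
    rw [g_ofFun]
    · split_ifs with hr
      · rfl
      · have := hκy r (by omega)
        have := hly r (by omega)
        have := hly (r+1) (by omega)
        simp only [f2, tog]
        split_ifs <;> omega
    · intro r
      have a1 := hκ r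
      have a2 := hl r
      have a3 := hkl (r+1)
      have a4 := hkl r
      have b := h r
      have b' := h (r+1)
      simp only [f2, tog, Nat.add_sub_cancel] at *
      split_ifs <;> omega
    · intro r
      have a1 := hκx r
      have a2 := hlx r
      have a4 := hkl r
      have a5 := hlx (r+1)
      have a6 := hl r
      have b := h r
      simp only [f2, tog] at *
      split_ifs <;> omega
  have M1 : ∀ ρ : Sh x y, (∀ r, g κ r ≤ g l r) → (∀ r, t + 1 ≤ r → g κ r ≤ g ρ r ∧ g ρ r ≤ g l r ∧ g l (r+1) ≤ g ρ r ∧ g ρ r ≤ g κ (r-1)) →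
      (((∀ r, g κ r ≤ f1 (g ρ) r) ∧ (∀ r, t ≤ r → f1 (g ρ) (r+1) ≤ g κ r)) ∧
      (∀ r, r < t+1 → g l r = f1 (g ρ) r) ∧ (∀ r, f1 (g ρ) r ≤ g l r ∧ g l (r+1) ≤ f1 (g ρ) r)) := by
    intro ρ hkl h
    refine ⟨⟨fun r => ?_, fun r hr => ?_⟩, fun r hr => ?_, fun r => ?_⟩
    · have := hkl r; have := h r
      simp only [f1, tog]; split_ifs <;> omega
    · have := hkl r; have := h (r+1)
      simp only [f1, tog, Nat.add_sub_cancel] at *; split_ifs <;> omega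
    · simp only [f1]; rw [if_pos hr]
    · have := hkl r; have := h r; have := hl r
      simp only [f1, tog]; split_ifs <;> omega
  have M2 : ∀ ρ : Sh x y, (∀ r, g κ r ≤ g l r) → (∀ r, t + 1 ≤ r → g κ r ≤ g ρ r ∧ g ρ r ≤ g l r ∧ g l (r+1) ≤ g ρ r ∧ g ρ r ≤ g κ (r-1)) →
      (((∀ r, r < t+1 → f2 (g ρ) r = g κ r) ∧ (∀ r, g κ r ≤ f2 (g ρ) r ∧ f2 (g ρ) (r+1) ≤ g κ r)) ∧
      (∀ r, f2 (g ρ) r ≤ g l r) ∧ (∀ r, t+1 ≤ r → g l (r+1) ≤ f2 (g ρ) r)) := by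
    intro ρ hkl h
    refine ⟨⟨fun r hr => ?_, fun r => ⟨?_, ?_⟩⟩, fun r => ?_, fun r hr => ?_⟩
    · simp only [f2]; rw [if_pos hr]
    · have := hkl r; have := h r
      simp only [f2, tog]; split_ifs <;> omega
    · have := hkl r; have := h (r+1); have := hκ r
      simp only [f2, tog, Nat.add_sub_cancel] at *; split_ifs <;> omega
    · have := hkl r; have := h r
      simp only [f2, tog]; split_ifs <;> omega
    · have := hkl r; have := h r; have := hl r
      simp only [f2, tog]; split_ifs <;> omega
  refine sum_nbij' (fun ρ => ofFun x y (f1 (g ρ))) (fun ρ => ofFun x y (f2 (g ρ))) ?_ ?_ ?_ ?_ ?_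
  · intro ρ hρ
    simp only [mem_filter, mem_univ, true_and] at hρ ⊢
    obtain ⟨c1, c2⟩ := hL ρ hρ
    simp only [G1 ρ c1 c2]
    exact M1 ρ c1 c2
  · intro ρ hρ
    simp only [mem_filter, mem_univ, true_and] at hρ ⊢
    obtain ⟨c1, c2⟩ := hR ρ hρ
    simp only [G2 ρ c1 c2]
    exact M2 ρ c1 c2
  · intro ρ hρ
    simp only [mem_filter, mem_univ, true_and] at hρ
    obtain ⟨c1, c2⟩ := hL ρ hρ
    have m := M1 ρ c1 c2
    simp only [← G1 ρ c1 c2] at m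
    obtain ⟨d1, d2⟩ := hR _ m
    apply g_ext
    intro r hr
    rw [G2 _ d1 d2]
    have e1 := G1 ρ c1 c2 r
    have e2 := hρ.1.1 r
    have e3 := c2 r
    have e4 := c1 r
    simp only [f2, f1, tog] at e1 ⊢
    split_ifs at e1 ⊢ <;> omega
  · intro ρ hρ
    simp only [mem_filter, mem_univ, true_and] at hρ
    obtain ⟨c1, c2⟩ := hR ρ hρ
    have m := M2 ρ c1 c2
    simp only [← G2 ρ c1 c2] at m
    obtain ⟨d1, d2⟩ := hL _ m
    apply g_ext
    intro r hr
    rw [G1 _ d1 d2]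
    have e1 := G2 ρ c1 c2 r
    have e2 := hρ.2.1 r
    have e3 := c2 r
    have e4 := c1 r
    simp only [f2, f1, tog] at e1 ⊢
    split_ifs at e1 ⊢ <;> omega
  · intro ρ hρ
    simp only [mem_filter, mem_univ, true_and] at hρ
    obtain ⟨c1, c2⟩ := hL ρ hρ
    simp only [G1 ρ c1 c2]
    refine wt_eq (x := x) t z u ht (g κ) (g l) (g ρ) (f1 (g ρ)) (hly y le_rfl) hρ.1.1 ?_ c2 c1 hl ?_
    · intro r hr; simp only [f1]; rw [if_pos hr]
    · intro r hr
      have := c2 r hr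
      simp only [f1, tog]
      rw [if_neg (by omega)]
      omega

/-- ordered products -/
def pr {A : Type*} [Fintype A] [DecidableEq A] (M : ℕ → Matrix A A R) : ℕ → Matrix A A R
  | 0 => 1
  | n+1 => pr M n * M n

lemma U_zero {x y : ℕ} (z : R) (u : ℕ → R) : (U 0 z : Matrix (Sh x y) (Sh x y) R) = V 0 z u := by
  classical
  ext κ l
  unfold U V
  by_cases h : (∀ r, g κ r ≤ g l r) ∧ ∀ r, g l (r+1) ≤ g κ r
  · rw [if_pos ⟨by omega, fun r => ⟨h.1 r, h.2 r⟩⟩, if_pos ⟨h.1, fun r _ => h.2 r⟩,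
      ← prod_pow_eq_pow_sum]
    refine prod_congr rfl fun r _ => ?_
    rw [max_eq_left (h.2 r)]; simp
  · rw [if_neg, if_neg]
    · rintro ⟨a, b⟩; exact h ⟨a, fun r => b r (Nat.zero_le _)⟩
    · rintro ⟨_, b⟩; exact h ⟨fun r => (b r).1, fun r => (b r).2⟩

/-- product of `U 1, …, U n` -/
noncomputable def DD {x y : ℕ} (u : ℕ → R) (n : ℕ) : Matrix (Sh x y) (Sh x y) R :=
  pr (fun s => U (s+1) (u (s+1))) n

lemma V_DD {x y : ℕ} (z : R) (u : ℕ → R) (n : ℕ) (hn : n ≤ y) :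
    (V 0 z u * DD u n : Matrix (Sh x y) (Sh x y) R) = DD u n * V n z u := by
  induction n with
  | zero => simp [DD, pr]
  | succ n ih =>
    have : (DD u (n+1) : Matrix (Sh x y) (Sh x y) R) = DD u n * U (n+1) (u (n+1)) := rfl
    rw [this, ← mul_assoc, ih (by omega), mul_assoc, ← comm n z u (by omega), ← mul_assoc]

lemma pr_DD {x y : ℕ} (z : ℕ → R) (u : ℕ → R) (n m : ℕ) (hn : n ≤ y) :
    (pr (fun i => U 0 (z i)) m * DD u n : Matrix (Sh x y) (Sh x y) R)
      = DD u n * pr (fun i => V n (z i) u) m := by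
  induction m with
  | zero => simp [pr]
  | succ m ih =>
    simp only [pr]
    rw [mul_assoc, U_zero (z m) u, V_DD _ _ _ hn, ← mul_assoc, ih, mul_assoc]

lemma DD_zero {x y : ℕ} (u : ℕ → R) (n : ℕ) (l : Sh x y) :
    (DD u n : Matrix (Sh x y) (Sh x y) R) (sh0 x y) l = if sh0 x y = l then 1 else 0 := by
  classical
  induction n generalizing l with
  | zero => simp [DD, pr, Matrix.one_apply]
  | succ n ih =>
    have : (DD u (n+1) : Matrix (Sh x y) (Sh x y) R) = DD u n * U (n+1) (u (n+1)) := rfl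
    rw [this, Matrix.mul_apply]
    simp only [ih, ite_mul, one_mul, zero_mul, sum_ite_eq, mem_univ, if_true]
    unfold U
    simp only [g_sh0]
    by_cases h : sh0 x y = l
    · subst h
      simp [g_sh0]
    · rw [if_neg h, if_neg]
      rintro ⟨a, b⟩
      apply h
      apply g_ext
      intro r _
      rw [g_sh0]
      cases r with
      | zero => rw [a 0 (by omega)]
      | succ r => have := (b r).2; omega

lemma pr_add {A : Type*} [Fintype A] [DecidableEq A] (M : ℕ → Matrix A A R) (m n : ℕ) :
    pr M (m + n) = pr M m * pr (fun i => M (m + i)) n := by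
  induction n with
  | zero => simp [pr]
  | succ n ih => rw [← add_assoc]; simp only [pr]; rw [ih, mul_assoc]

lemma pr_congr {A : Type*} [Fintype A] [DecidableEq A] (M M' : ℕ → Matrix A A R) (n : ℕ)
    (h : ∀ i, i < n → M i = M' i) :
    pr M n = pr M' n := by
  induction n with
  | zero => simp [pr]
  | succ n ih => simp only [pr]; rw [ih (fun i hi => h i (by omega)), h n (by omega)]

/-- the algebraic form of the theorem -/
lemma main_alg {x y : ℕ} (k : ℕ) (hy : 1 ≤ y) (ζ : ℕ → R) (l : Sh x y) :
    (pr (fun t => U (t - k) (ζ t)) (k + y) : Matrix (Sh x y) (Sh x y) R) (sh0 x y) l =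
    (pr (fun i => V (y-1) (ζ i) (fun s => ζ (k + s))) (k+1) : Matrix (Sh x y) (Sh x y) R)
      (sh0 x y) l := by
  have e : k + y = (k + 1) + (y - 1) := by omega
  rw [e, pr_add]
  have e1 : pr (fun t => (U (t - k) (ζ t) : Matrix (Sh x y) (Sh x y) R)) (k+1)
      = pr (fun t => U 0 (ζ t)) (k+1) := pr_congr _ _ _ fun i hi => by
    rw [show i - k = 0 by omega]
  have e2 : pr (fun i => (U (k + 1 + i - k) (ζ (k+1+i)) : Matrix (Sh x y) (Sh x y) R)) (y-1)
      = DD (fun s => ζ (k+s)) (y-1) := pr_congr _ _ _ fun i hi => by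
    rw [show k + 1 + i - k = i + 1 by omega, show k + 1 + i = k + (i + 1) by omega]
  rw [e1, e2, pr_DD _ _ _ _ (by omega), Matrix.mul_apply]
  simp [DD_zero]

/-- chain expansion -/
lemma pr_chain {A : Type*} [Fintype A] [DecidableEq A] (M : ℕ → Matrix A A R) (n : ℕ) (i j : A) :
    pr M n i j = ∑ c : Fin (n+1) → A, if c 0 = i ∧ c (Fin.last n) = j then
      ∏ t : Fin n, M t (c t.castSucc) (c t.succ) else 0 := by
  induction n generalizing j with
  | zero =>
    simp only [pr, Matrix.one_apply]
    rw [Fintype.sum_equiv (Equiv.funUnique (Fin 1) A) _ (fun a => if a = i ∧ a = j then 1 else 0)]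
    · by_cases h : i = j
      · subst h; simp
      · rw [if_neg h, sum_eq_zero]
        intro a _
        rw [if_neg]
        rintro ⟨rfl, rfl⟩; exact h rfl
    · intro c; simp [Equiv.funUnique]
  | succ n ih =>
    simp only [pr]
    rw [Matrix.mul_apply, ← (Fin.snocEquiv (fun _ : Fin (n+2) => A)).sum_comp, Fintype.sum_prod_type]
    simp only [Fin.snocEquiv, Equiv.coe_fn_mk, Fin.snoc_last, Fin.prod_univ_castSucc]
    symm
    rw [sum_eq_single j]
    · simp only [ih]
      simp only [sum_mul]
      symm
      rw [sum_comm]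
      refine sum_congr rfl fun c _ => ?_
      rw [sum_eq_single (c (Fin.last n))]
      · have h0 : (Fin.snoc c j : Fin (n+2) → A) 0 = c 0 := by
          have := Fin.snoc_castSucc (α := fun _ : Fin (n+2) => A) (x := j) (p := c) 0
          exact this
        have hs : ∀ t : Fin n, (Fin.snoc c j : Fin (n+2) → A) t.castSucc.succ = c t.succ := by
          intro t
          rw [← Fin.castSucc_succ]
          exact Fin.snoc_castSucc (α := fun _ : Fin (n+2) => A) (x := j) (p := c) t.succ
        have hs' : ∀ t : Fin (n+1), (Fin.snoc c j : Fin (n+2) → A) t.castSucc = c t := 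
          fun t => Fin.snoc_castSucc (α := fun _ : Fin (n+2) => A) (x := j) (p := c) t
        have hl : (Fin.snoc c j : Fin (n+2) → A) (Fin.last n).succ = j := by
          rw [Fin.succ_last]; exact Fin.snoc_last (α := fun _ : Fin (n+2) => A) (x := j) (p := c)
        rw [h0]
        simp only [hs, hs', hl]
        by_cases h : c 0 = i <;> simp [h]
      · intro a _ ha
        rw [if_neg]
        · simp
        · rintro ⟨_, rfl⟩; exact ha rfl
      · simp
    · intro b _ hb
      refine sum_eq_zero fun c _ => ?_
      rw [if_neg]
      rintro ⟨_, h⟩; exact hb h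
    · simp

end FS

namespace FS

open Finset

lemma seg {x : ℕ} (p : Fin x → Prop) (hp : ∀ i j, i ≤ j → p j → p i) (j : Fin x) :
    (j : ℕ) < Nat.card {j // p j} ↔ p j := by
  classical
  rw [Nat.card_eq_fintype_card, Fintype.card_subtype]
  constructor
  · intro h
    by_contra hj
    have : (univ.filter p) ⊆ Iio j := by
      intro i hi
      simp only [mem_filter, mem_univ, true_and, mem_Iio] at hi ⊢
      by_contra hij
      exact hj (hp j i (not_lt.mp hij) hi)
    have := card_le_card this
    rw [Fin.card_Iio] at this
    exact absurd h (not_lt.mpr (by convert this))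
  · intro h
    have : Iic j ⊆ (univ.filter p) := by
      intro i hi
      simp only [mem_filter, mem_univ, true_and, mem_Iic] at hi ⊢
      exact hp i j hi h
    have := card_le_card this
    rw [Fin.card_Iic] at this
    refine lt_of_lt_of_le (Nat.lt_succ_self _) (le_trans this (le_of_eq ?_))
    congr

lemma card_int {x a b : ℕ} (p : Fin x → Prop) (hb : b ≤ x)
    (hp : ∀ j : Fin x, p j ↔ a ≤ (j : ℕ) ∧ (j : ℕ) < b) : Nat.card {j // p j} = b - a := by
  classical
  rw [Nat.card_eq_fintype_card, Fintype.card_subtype, ← Nat.card_Ico]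
  refine card_bij' (fun j _ => (j : ℕ)) (fun n hn => ⟨n, by simp at hn; omega⟩) ?_ ?_ ?_ ?_
  · intro j hj
    simp only [mem_filter, mem_univ, true_and] at hj
    rw [mem_Ico]; exact (hp j).1 hj
  · intro n hn
    rw [mem_Ico] at hn
    simp only [mem_filter, mem_univ, true_and]
    exact (hp _).2 hn
  · intros; rfl
  · intros; rfl

lemma le_of_fin {x a b : ℕ} (ha : a ≤ x) (h : ∀ j : Fin x, (j : ℕ) < a → (j : ℕ) < b) : a ≤ b := by
  by_contra hab
  have := h ⟨b, by omega⟩ (by simp; omega)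
  simp at this

lemma sh_ext {x y : ℕ} {f f' : Sh x y}
    (h : ∀ r, r < y → ∀ j : Fin x, (j : ℕ) < g f r ↔ (j : ℕ) < g f' r) : f = f' := by
  apply g_ext
  intro r hr
  exact le_antisymm (le_of_fin (g_le _ _) fun j => (h r hr j).1)
    (le_of_fin (g_le _ _) fun j => (h r hr j).2)

lemma natcard_le_x {x : ℕ} (p : Fin x → Prop) : Nat.card {j // p j} ≤ x := by
  have := Finite.card_subtype_le p
  simpa using this

lemma natcard_mono {x : ℕ} (p q : Fin x → Prop) (h : ∀ j, p j → q j) :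
    Nat.card {j // p j} ≤ Nat.card {j // q j} :=
  Nat.card_le_card_of_injective (fun j => (⟨j.1, h _ j.2⟩ : {j // q j}))
    (fun a b hab => Subtype.ext (by simpa using hab))

noncomputable def pathSh {x y : ℕ} (h : Fin x → Fin (y+1)) : Sh x y :=
  ofFun x y (fun r => Nat.card {j // (h j : ℕ) + r + 1 ≤ y})

lemma g_pathSh {x y : ℕ} (h : Fin x → Fin (y+1)) (r : ℕ) :
    g (pathSh h) r = Nat.card {j // (h j : ℕ) + r + 1 ≤ y} := by
  unfold pathSh
  rw [g_ofFun]
  · split_ifs with hr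
    · rfl
    · symm
      rw [Nat.card_eq_zero]
      left
      exact ⟨fun j => by have := j.2; omega⟩
  · intro r
    exact natcard_mono _ _ fun j hj => by omega
  · intro r
    exact natcard_le_x _

lemma pathKey {x y : ℕ} (h : Fin x → Fin (y+1)) (hm : Monotone h) (j : Fin x) (r : ℕ) :
    (j : ℕ) < g (pathSh h) r ↔ (h j : ℕ) + r + 1 ≤ y := by
  rw [g_pathSh]
  apply seg (fun j => (h j : ℕ) + r + 1 ≤ y)
  intro i j hij hj
  have : (h i : ℕ) ≤ h j := hm hij
  omega

lemma lam_eq {x y : ℕ} (B : Fin x → Fin (y+1)) (r : Fin y) : lam B r = g (pathSh B) r := by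
  rw [g_pathSh]
  unfold lam
  have : ∀ j, ((B j : ℕ) ≤ y - ((r : ℕ) + 1)) ↔ ((B j : ℕ) + r + 1 ≤ y) := fun j => by
    have := r.isLt; omega
  simp only [this]

def invP {x y : ℕ} (f : Sh x y) : Fin x → Fin (y+1) := fun j =>
  ⟨y - ((range y).filter (fun r => (j : ℕ) < g f r)).card, by omega⟩

lemma invKey {x y : ℕ} (f : Sh x y) (j : Fin x) (r : ℕ) :
    (j : ℕ) < g f r ↔ (invP f j : ℕ) + r + 1 ≤ y := by
  have hle : ((range y).filter (fun r => (j : ℕ) < g f r)).card ≤ y := by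
    simpa using card_filter_le (range y) (fun r => (j : ℕ) < g f r)
  simp only [invP]
  constructor
  · intro h
    have hr : r < y := by
      by_contra hr
      rw [g_ge f r (by omega)] at h; omega
    have : range (r+1) ⊆ (range y).filter (fun r => (j : ℕ) < g f r) := by
      intro i hi
      simp only [mem_filter, mem_range] at hi ⊢
      exact ⟨by omega, lt_of_lt_of_le h (g_anti f (by omega))⟩
    have := card_le_card this
    rw [card_range] at this
    omega
  · intro h
    by_contra hj
    have : (range y).filter (fun r => (j : ℕ) < g f r) ⊆ range r := by
      intro i hi
      simp only [mem_filter, mem_range] at hi ⊢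
      by_contra hir
      have := g_anti f (show r ≤ i by omega)
      omega
    have := card_le_card this
    rw [card_range] at this
    omega

lemma fin_eq_of {y : ℕ} (a b : Fin (y+1)) (h : ∀ r, (a : ℕ) + r + 1 ≤ y ↔ (b : ℕ) + r + 1 ≤ y) :
    a = b := by
  apply Fin.ext
  have h1 := a.isLt
  have h2 := b.isLt
  have h3 := h (y - 1 - a)
  have h4 := h (y - 1 - b)
  omega

lemma fin_le_of {y : ℕ} (a b : Fin (y+1)) (h : ∀ r, (b : ℕ) + r + 1 ≤ y → (a : ℕ) + r + 1 ≤ y) :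
    a ≤ b := by
  rw [Fin.le_def]
  have h1 := a.isLt
  have h2 := b.isLt
  have h4 := h (y - 1 - b)
  omega

lemma invP_mono {x y : ℕ} (f : Sh x y) : Monotone (invP f) := by
  intro i j hij
  apply fin_le_of
  intro r hr
  rw [← invKey] at hr ⊢
  have : (i : ℕ) ≤ j := hij
  omega

lemma invP_pathSh {x y : ℕ} (h : Fin x → Fin (y+1)) (hm : Monotone h) : invP (pathSh h) = h := by
  funext j
  apply fin_eq_of
  intro r
  rw [← invKey, pathKey h hm]

lemma pathSh_invP {x y : ℕ} (f : Sh x y) : pathSh (invP f) = f := by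
  apply sh_ext
  intro r _ j
  rw [pathKey _ (invP_mono f), ← invKey]

lemma nh_eq {x y : ℕ} (C D : Fin x → Fin (y+1)) (hC : Monotone C) (hD : Monotone D)
    (h : ∀ j, D j ≤ C j) :
    ∑ r ∈ range y, (g (pathSh D) r - max (g (pathSh C) r) (g (pathSh D) (r+1)))
      + Nat.card {j // C j = D j} = x := by
  classical
  have h1 : ∀ r ∈ range y, (g (pathSh D) r - max (g (pathSh C) r) (g (pathSh D) (r+1)))
      = ∑ j : Fin x, if r = y - 1 - (D j : ℕ) then (if D j = C j then 0 else 1) else 0 := by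
    intro r hr
    rw [mem_range] at hr
    rw [← card_int (fun j : Fin x => (D j : ℕ) + r + 1 = y ∧ ¬ D j = C j) (g_le (pathSh D) r)]
    · rw [Nat.card_eq_fintype_card, Fintype.card_subtype, card_filter]
      refine sum_congr rfl fun j _ => ?_
      have a1 : (D j : ℕ) ≤ C j := h j
      have a2 := (C j).isLt
      by_cases e : D j = C j
      · simp [e]
      · have : (D j : ℕ) ≠ C j := fun h => e (Fin.ext h)
        simp only [e, not_false_eq_true, and_true, if_false]
        have : (D j : ℕ) + r + 1 = y ↔ r = y - 1 - (D j : ℕ) := by omega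
        simp only [this]
    · intro j
      have a1 := pathKey D hD j r
      have a2 := pathKey D hD j (r+1)
      have a3 := pathKey C hC j r
      have a4 : (D j : ℕ) ≤ C j := h j
      rw [Fin.ext_iff]
      omega
  rw [sum_congr rfl h1, sum_comm, Nat.card_eq_fintype_card, Fintype.card_subtype, card_filter,
    ← sum_add_distrib]
  rw [sum_congr rfl (g := fun _ => 1)]
  · simp
  · intro j _
    rw [sum_ite_eq']
    by_cases e : D j = C j
    · simp [e]
    · have a1 : (D j : ℕ) ≤ C j := h j
      have : (D j : ℕ) ≠ C j := fun h => e (Fin.ext h)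
      have a2 := (C j).isLt
      rw [if_pos (by rw [mem_range]; omega), if_neg e, if_neg (fun h => e h.symm)]

open Classical in
lemma seq_count (e : ℕ → ℕ) (v n : ℕ) (he : ∀ i, i < n → e (i+1) ≤ e i) :
    (∑ t ∈ range n, if e (t+1) < v ∧ v < e t then 1 else 0) =
      if e n < v ∧ v < e 0 ∧ ∀ i, 0 < i → i < n → e i ≠ v then 1 else 0 := by
  have hle : ∀ i m, i ≤ m → m ≤ n → e m ≤ e i := by
    intro i m him
    induction m, him using Nat.le_induction with
    | base => intro _; exact le_rfl
    | succ m hm ih =>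
      intro h
      exact (he m (by omega)).trans (ih (by omega))
  induction n with
  | zero => simp; omega
  | succ n ih =>
    rw [sum_range_succ, ih (fun i hi => he i (by omega)) (fun i m h h' => hle i m h (by omega))]
    have hn := he n (by omega)
    have h0 := hle 0 n (by omega) (by omega)
    rcases lt_trichotomy (e n) v with h | h | h
    · rw [if_neg (show ¬ (e (n+1) < v ∧ v < e n) by omega), add_zero]
      congr 1
      apply propext
      constructor
      · rintro ⟨a, b, c⟩
        refine ⟨by omega, b, fun i hi hi' => ?_⟩
        rcases Nat.lt_succ_iff_lt_or_eq.mp hi' with h' | rfl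
        · exact c i hi h'
        · omega
      · rintro ⟨a, b, c⟩
        exact ⟨h, b, fun i hi hi' => c i hi (by omega)⟩
    · rw [if_neg (by omega), if_neg (by omega), if_neg]
      rintro ⟨a, b, c⟩
      rcases Nat.eq_zero_or_pos n with rfl | hn'
      · omega
      · exact c n hn' (by omega) h
    · rw [if_neg (show ¬ (e n < v ∧ _) by omega), zero_add]
      congr 1
      apply propext
      constructor
      · rintro ⟨a, b⟩
        refine ⟨a, by omega, fun i hi hi' => ?_⟩
        have := hle i n (by omega) (by omega)
        omega
      · rintro ⟨a, b, c⟩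
        exact ⟨a, h⟩

end FS

namespace FS

open Finset

def validP {x y : ℕ} (k : ℕ) (L : Sh x y) (c : Fin (k+2) → Sh x y) : Prop :=
  (c 0 = sh0 x y ∧ c (Fin.last (k+1)) = L) ∧
    ∀ t : Fin (k+1), ∀ r, g (c t.castSucc) r ≤ g (c t.succ) r

def statP {x y : ℕ} {k : ℕ} (c : Fin (k+2) → Sh x y) (t : Fin (k+1)) : ℕ :=
  ∑ r ∈ range y, (g (c t.succ) r - max (g (c t.castSucc) r) (g (c t.succ) (r+1)))

def ustP {x y : ℕ} {k : ℕ} (c : Fin (k+2) → Sh x y) (s : ℕ) : ℕ :=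
  ∑ t : Fin (k+1), (max (g (c t.castSucc) s) (g (c t.succ) (s+1)) - g (c t.castSucc) s)

lemma ext_zero {x y k : ℕ} (T B : Fin x → Fin (y+1)) (P : Fin k → Fin x → Fin (y+1)) :
    extP T B P 0 = T := by
  simp [extP]

lemma ext_last {x y k : ℕ} (T B : Fin x → Fin (y+1)) (P : Fin k → Fin x → Fin (y+1)) :
    extP T B P (Fin.last (k+1)) = B := by
  simp [extP]

lemma ext_mid {x y k : ℕ} (T B : Fin x → Fin (y+1)) (P : Fin k → Fin x → Fin (y+1)) (i : Fin k) :
    extP T B P i.succ.castSucc = P i := by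
  have := i.isLt
  unfold extP
  rw [dif_neg (by simp), dif_neg (by simp; omega)]
  congr 1

lemma fin_cases3 {k : ℕ} (p : Fin (k+2) → Prop) (h0 : p 0) (h1 : p (Fin.last (k+1)))
    (h : ∀ i : Fin k, p i.succ.castSucc) : ∀ t, p t := by
  intro t
  refine Fin.lastCases h1 (fun t => ?_) t
  refine Fin.cases h0 (fun t => h t) t

section
variable {x y k : ℕ} {T B : Fin x → Fin (y+1)} (hT : ∀ j, (T j : ℕ) = y) (hB : Monotone B)

include hT hB in
lemma ext_mono {P : Fin k → Fin x → Fin (y+1)} (hP : InPk T B P) (t : Fin (k+2)) :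
    Monotone (extP T B P t) := by
  revert t
  apply fin_cases3
  · rw [ext_zero]; intro i j _; rw [Fin.le_def, hT, hT]
  · rw [ext_last]; exact hB
  · intro i; rw [ext_mid]; exact (hP.1 i).1

include hT in
lemma ext_le {P : Fin k → Fin x → Fin (y+1)} (hP : InPk T B P) (t : Fin (k+1)) (j : Fin x) :
    extP T B P t.succ j ≤ extP T B P t.castSucc j := by
  have hTm : ∀ b : Fin (y+1), b ≤ T j := fun b => by
    rw [Fin.le_def, hT]; have := b.isLt; omega
  refine Fin.cases ?_ (fun t => ?_) t
  · rw [Fin.castSucc_zero, ext_zero]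
    exact hTm _
  · rw [ext_mid]
    by_cases ht : (t : ℕ) + 1 < k
    · have : t.succ.succ = (⟨(t : ℕ) + 1, ht⟩ : Fin k).succ.castSucc := Fin.ext (by simp)
      rw [this, ext_mid]
      exact hP.2 t ht j
    · have : t.succ.succ = Fin.last (k+1) := Fin.ext (by simp; omega)
      rw [this, ext_last]
      exact ((hP.1 t).2 j).1

include hT in
lemma pathSh_T : pathSh T = sh0 x y := by
  apply g_ext
  intro r _
  rw [g_pathSh, g_sh0, Nat.card_eq_zero]
  left
  exact ⟨fun j => by have := j.2; rw [hT] at this; omega⟩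

include hT hB in
lemma ust_eq {P : Fin k → Fin x → Fin (y+1)} (hP : InPk T B P) (s : Fin (y-1)) :
    ustP (fun t => pathSh (extP T B P t)) s = ustat T B P s := by
  classical
  have hs := s.isLt
  unfold ustP ustat
  have h1 : ∀ t : Fin (k+1), (max (g (pathSh (extP T B P t.castSucc)) s)
      (g (pathSh (extP T B P t.succ)) (s+1)) - g (pathSh (extP T B P t.castSucc)) s)
      = ∑ j : Fin x, if (extP T B P t.succ j : ℕ) < y - ((s : ℕ) + 1) ∧
          y - ((s : ℕ) + 1) < (extP T B P t.castSucc j : ℕ) then 1 else 0 := by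
    intro t
    rw [← card_filter, ← Fintype.card_subtype, ← Nat.card_eq_fintype_card]
    symm
    apply card_int
    · exact max_le (g_le _ _) (g_le _ _)
    · intro j
      have a2 := pathKey _ (ext_mono hT hB hP t.succ) j (s+1)
      have a3 := pathKey _ (ext_mono hT hB hP t.castSucc) j s
      omega
  rw [sum_congr rfl fun t _ => h1 t, sum_comm, Nat.card_eq_fintype_card, Fintype.card_subtype,
    card_filter]
  refine sum_congr rfl fun j _ => ?_
  let e : ℕ → ℕ := fun t => if h : t < k + 2 then (extP T B P ⟨t, h⟩ j : ℕ) else 0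
  have he : ∀ t (h : t < k + 2), e t = (extP T B P ⟨t, h⟩ j : ℕ) := fun t h => by
    simp only [e]; rw [dif_pos h]
  have := seq_count e (y - ((s : ℕ) + 1)) (k+1) (fun i hi => by
    rw [he _ (by omega), he _ (by omega)]
    exact ext_le hT hP ⟨i, hi⟩ j)
  rw [sum_range] at this
  have e0 : e 0 = (T j : ℕ) := by
    rw [he _ (by omega)]
    exact congrArg (fun f => (f j : ℕ)) (ext_zero T B P)
  have e1 : e (k+1) = (B j : ℕ) := by
    rw [he _ (by omega)]
    exact congrArg (fun f => (f j : ℕ)) (ext_last T B P)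
  have em : ∀ i : Fin k, e (i+1) = (P i j : ℕ) := fun i => by
    rw [he _ (by omega)]
    exact congrArg (fun f => (f j : ℕ)) (ext_mid T B P i)
  rw [e0, e1] at this
  rw [sum_congr rfl fun t _ => ?_, this]
  · congr 1
    apply propext
    refine and_congr_right fun _ => and_congr_right fun _ => ⟨fun h i => ?_, fun h i hi hi' => ?_⟩
    · rw [← em]; exact h _ (by omega) (by omega)
    · have := em ⟨i - 1, by omega⟩
      simp only [Nat.sub_add_cancel hi] at this
      rw [this]; exact h _
  · rw [he _ (show (t : ℕ) + 1 < k + 2 by omega), he _ (show (t : ℕ) < k + 2 by omega)]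
    rfl

include hT hB in
lemma cardP (a : Fin (k+1) → ℕ) (u : Fin (y-1) → ℕ) :
    Nat.card {P : Fin k → Fin x → Fin (y+1) // InPk T B P ∧
        (∀ i, hstat T B P i = a i) ∧ (∀ s, ustat T B P s = u s)}
    = Nat.card {c : Fin (k+2) → Sh x y // validP k (pathSh B) c ∧
        (∀ i, statP c i + a i = x) ∧ (∀ s : Fin (y-1), ustP c s = u s)} := by
  let i1 : (Fin k → Fin x → Fin (y+1)) → (Fin (k+2) → Sh x y) := fun P t => pathSh (extP T B P t)
  let j1 : (Fin (k+2) → Sh x y) → (Fin k → Fin x → Fin (y+1)) := fun c i => invP (c i.succ.castSucc)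
  have hst : ∀ P : Fin k → Fin x → Fin (y+1), InPk T B P → ∀ i, statP (i1 P) i + hstat T B P i = x := by
    intro P hP i
    exact nh_eq _ _ (ext_mono hT hB hP _) (ext_mono hT hB hP _) (ext_le hT hP i)
  have A : ∀ P : Fin k → Fin x → Fin (y+1), InPk T B P → validP k (pathSh B) (i1 P) := by
    intro P hP
    refine ⟨⟨?_, ?_⟩, fun t r => ?_⟩
    · simp only [i1]; rw [ext_zero, pathSh_T hT]
    · simp only [i1]; rw [ext_last]
    · simp only [i1]
      rw [g_pathSh, g_pathSh]
      refine natcard_mono _ _ fun j hj => ?_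
      have : (extP T B P t.succ j : ℕ) ≤ extP T B P t.castSucc j := ext_le hT hP t j
      omega
  have E : ∀ c, validP k (pathSh B) c → ∀ t, extP T B (j1 c) t = invP (c t) := by
    intro c hc
    apply fin_cases3
    · rw [ext_zero, hc.1.1, ← pathSh_T hT, invP_pathSh]
      intro i j _; rw [Fin.le_def, hT, hT]
    · rw [ext_last, hc.1.2, invP_pathSh _ hB]
    · intro i; rw [ext_mid]
  have Bm : ∀ P : Fin k → Fin x → Fin (y+1), InPk T B P → j1 (i1 P) = P := by
    intro P hP
    funext i
    simp only [i1, j1]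
    rw [ext_mid, invP_pathSh _ (hP.1 i).1]
  have C : ∀ c, validP k (pathSh B) c → i1 (j1 c) = c := by
    intro c hc
    funext t
    simp only [i1]
    rw [E c hc, pathSh_invP]
  have D : ∀ c, validP k (pathSh B) c → InPk T B (j1 c) := by
    intro c hc
    have hle : ∀ t : Fin (k+1), ∀ j, invP (c t.succ) j ≤ invP (c t.castSucc) j := by
      intro t j
      apply fin_le_of
      intro r hr
      rw [← invKey] at hr ⊢
      exact lt_of_lt_of_le hr (hc.2 t r)
    have hanti : ∀ j, Antitone (fun t => invP (c t) j) := fun j =>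
      Fin.antitone_iff_succ_le.mpr fun t => hle t j
    refine ⟨fun i => ⟨invP_mono _, fun j => ⟨?_, ?_⟩⟩, fun i hi j => ?_⟩
    · have := hanti j (Fin.le_last i.succ.castSucc)
      simp only [hc.1.2] at this
      rwa [invP_pathSh _ hB] at this
    · rw [Fin.le_def, hT]; have := (j1 c i j).isLt; omega
    · exact hanti j (by rw [Fin.le_def]; simp)
  refine Nat.card_congr ⟨fun P => ⟨i1 P.1, A _ P.2.1, fun i => ?_, fun s => ?_⟩,
    fun c => ⟨j1 c.1, D _ c.2.1, fun i => ?_, fun s => ?_⟩, fun P => ?_, fun c => ?_⟩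
  · rw [← P.2.2.1 i]; exact hst _ P.2.1 i
  · rw [← P.2.2.2 s]; exact ust_eq hT hB P.2.1 s
  · have h1 := hst _ (D _ c.2.1) i
    have h2 := c.2.2.1 i
    rw [C _ c.2.1] at h1
    omega
  · have h1 := ust_eq hT hB (D _ c.2.1) s
    rw [← c.2.2.2 s, ← h1]
    exact congrArg (fun d => ustP d s) (C _ c.2.1)
  · exact Subtype.ext (Bm _ P.2.1)
  · exact Subtype.ext (C _ c.2.1)

end

end FS

namespace FS

open Finset

def validS {x y : ℕ} (k : ℕ) (L : Sh x y) (c : Fin (k+y+1) → Sh x y) : Prop :=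
  (c 0 = sh0 x y ∧ c (Fin.last (k+y)) = L) ∧
    ∀ t : Fin (k+y), (∀ r, r < (t : ℕ) - k → g (c t.succ) r = g (c t.castSucc) r) ∧
      (∀ r, g (c t.castSucc) r ≤ g (c t.succ) r ∧ g (c t.succ) (r+1) ≤ g (c t.castSucc) r)

def statS {x y : ℕ} {N : ℕ} (c : Fin (N+1) → Sh x y) (t : Fin N) : ℕ :=
  ∑ r ∈ range y, (g (c t.succ) r - g (c t.castSucc) r)

section
variable {x y k : ℕ} {B : Fin x → Fin (y+1)}

noncomputable def shOf (B : Fin x → Fin (y+1)) (S : Fin y → Fin x → ℕ) (t : ℕ) : Sh x y :=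
  ofFun x y (fun r => Nat.card {j : Fin x // ∃ h : r < y, (j : ℕ) < lam B ⟨r, h⟩ ∧ S ⟨r, h⟩ j ≤ t})

lemma lam_anti (r r' : Fin y) (h : r ≤ r') : lam B r' ≤ lam B r := by
  rw [lam_eq, lam_eq]; exact g_anti _ h

lemma shOf_key {S : Fin y → Fin x → ℕ} (hS : IsFlaggedSSYT k B S) (t : ℕ) (r : Fin y) (j : Fin x) :
    (j : ℕ) < g (shOf B S t) r ↔ (j : ℕ) < lam B r ∧ S r j ≤ t := by
  unfold shOf
  rw [g_ofFun]
  · rw [if_pos r.isLt, seg]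
    · simp
    · rintro i j hij ⟨h, a, b⟩
      have : (i : ℕ) ≤ j := hij
      exact ⟨h, by omega, (hS.2.1 _ i j hij a).trans b⟩
  · intro r
    apply natcard_mono
    rintro j ⟨h, a, b⟩
    refine ⟨by omega, lt_of_lt_of_le a (lam_anti _ _ (by simp [Fin.le_def])), ?_⟩
    have := hS.2.2.1 ⟨r, by omega⟩ ⟨r+1, h⟩ j rfl a
    omega
  · intro r; exact natcard_le_x _

lemma shOf_wt {S : Fin y → Fin x → ℕ} (hS : IsFlaggedSSYT k B S) (t : ℕ) :
    ∑ r ∈ range y, (g (shOf B S (t+1)) r - g (shOf B S t) r) = wt B S (t+1) := by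
  classical
  unfold wt
  rw [Nat.card_eq_fintype_card, Fintype.card_subtype, card_filter, Fintype.sum_prod_type, sum_range]
  refine sum_congr rfl fun r _ => ?_
  rw [← card_filter, ← Fintype.card_subtype, ← Nat.card_eq_fintype_card]
  symm
  apply card_int _ (g_le _ _)
  intro j
  have h1 := shOf_key hS t r j
  have h2 := shOf_key hS (t+1) r j
  simp only
  omega

lemma shOf_valid {S : Fin y → Fin x → ℕ} (hS : IsFlaggedSSYT k B S) :
    validS k (pathSh B) (fun t : Fin (k+y+1) => shOf B S t) := by
  refine ⟨⟨?_, ?_⟩, fun t => ⟨fun r hr => ?_, fun r => ⟨?_, ?_⟩⟩⟩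
  · apply sh_ext
    intro r hr j
    rw [shOf_key hS _ ⟨r, hr⟩ j, g_sh0]
    have := hS.1 ⟨r, hr⟩ j
    simp only [Fin.val_zero]
    omega
  · apply sh_ext
    intro r hr j
    rw [shOf_key hS _ ⟨r, hr⟩ j, ← lam_eq B ⟨r, hr⟩]
    have := hS.1 ⟨r, hr⟩ j
    simp only [Fin.val_last] at *
    omega
  · have hry : r < y := by omega
    refine le_antisymm (le_of_fin (g_le _ _) fun j => ?_) (le_of_fin (g_le _ _) fun j => ?_)
    all_goals
      rw [shOf_key hS _ ⟨r, hry⟩ j, shOf_key hS _ ⟨r, hry⟩ j]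
      have := hS.1 ⟨r, hry⟩ j
      simp only [Fin.val_succ, Fin.val_castSucc] at *
      omega
  · by_cases hry : r < y
    · refine le_of_fin (g_le _ _) fun j => ?_
      rw [shOf_key hS _ ⟨r, hry⟩ j, shOf_key hS _ ⟨r, hry⟩ j]
      simp only [Fin.val_succ, Fin.val_castSucc] at *
      omega
    · rw [g_ge _ _ (by omega)]; omega
  · by_cases hry : r + 1 < y
    · refine le_of_fin (g_le _ _) fun j => ?_
      rw [shOf_key hS _ ⟨r+1, hry⟩ j, shOf_key hS _ ⟨r, by omega⟩ j]
      have h1 := lam_anti (B := B) ⟨r, by omega⟩ ⟨r+1, hry⟩ (by simp [Fin.le_def])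
      have h2 := hS.2.2.1 ⟨r, by omega⟩ ⟨r+1, hry⟩ j rfl
      simp only [Fin.val_succ, Fin.val_castSucc] at *
      omega
    · rw [g_ge _ _ (by omega)]; omega

open Classical in
noncomputable def tabOf (B : Fin x → Fin (y+1)) (c : Fin (k+y+1) → Sh x y) : Fin y → Fin x → ℕ :=
  fun r j => if (j : ℕ) < lam B r then Nat.card {t : Fin (k+y+1) // g (c t) r ≤ j} else 0

lemma chain_mono {c : Fin (k+y+1) → Sh x y} (hc : validS k (pathSh B) c) (r : ℕ) :
    Monotone (fun t => g (c t) r) :=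
  Fin.monotone_iff_le_succ.mpr fun t => ((hc.2 t).2 r).1

lemma tab_key {c : Fin (k+y+1) → Sh x y} (hc : validS k (pathSh B) c) (r : Fin y) (j : Fin x)
    (hj : (j : ℕ) < lam B r) (t : Fin (k+y+1)) : tabOf B c r j ≤ t ↔ (j : ℕ) < g (c t) r := by
  unfold tabOf
  rw [if_pos hj, ← not_lt, seg (fun t => g (c t) r ≤ j), not_le]
  intro a b hab h
  exact (chain_mono hc r hab).trans h

lemma tab_le {c : Fin (k+y+1) → Sh x y} (hc : validS k (pathSh B) c) (r : Fin y) (j : Fin x)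
    (hj : (j : ℕ) < lam B r) : tabOf B c r j ≤ k + y := by
  have := tab_key hc r j hj (Fin.last _)
  rw [hc.1.2, ← lam_eq] at this
  simpa using this.2 hj

lemma chain_le {c : Fin (k+y+1) → Sh x y} (hc : validS k (pathSh B) c) (r : Fin y)
    (t : Fin (k+y+1)) : g (c t) r ≤ lam B r := by
  rw [lam_eq, ← hc.1.2]
  exact chain_mono hc r (Fin.le_last t)

lemma tab_flag {c : Fin (k+y+1) → Sh x y} (hc : validS k (pathSh B) c) (r : Fin y)
    (n : ℕ) (hn : k + r + 1 ≤ n) (hn' : n < k + y + 1) :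
    g (c ⟨n, hn'⟩) r = g (c ⟨k + r + 1, by omega⟩) r := by
  induction n, hn using Nat.le_induction with
  | base => rfl
  | succ n hn ih =>
    rw [← ih (by omega)]
    exact (hc.2 ⟨n, by omega⟩).1 r (by simp; omega)

lemma tab_ssyt {c : Fin (k+y+1) → Sh x y} (hc : validS k (pathSh B) c) :
    IsFlaggedSSYT k B (tabOf B c) := by
  refine ⟨fun r j hj => ⟨?_, ?_⟩, fun r j j' hjj hj' => ?_, fun r r' j hr hj => ?_, fun r j hj => ?_⟩
  · by_contra h
    have := (tab_key hc r j hj 0).1 (by simp; omega)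
    rw [hc.1.1, g_sh0] at this
    omega
  · have h1 := tab_flag hc r (k+y) (by omega) (by omega)
    have h2 := tab_key hc r j hj ⟨k + r + 1, by omega⟩
    rw [← h1] at h2
    apply h2.2
    have : (⟨k + y, by omega⟩ : Fin (k+y+1)) = Fin.last _ := rfl
    rw [this, hc.1.2, ← lam_eq]
    exact hj
  · have hjj' : (j : ℕ) ≤ j' := hjj
    have h1 := tab_le hc r j' hj'
    have h2 := tab_key hc r j' hj' ⟨_, Nat.lt_succ_of_le h1⟩
    have h3 := tab_key hc r j (by omega) ⟨_, Nat.lt_succ_of_le h1⟩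
    simp only [le_refl, true_iff] at h2
    exact h3.2 (by omega)
  · have h1 := tab_le hc r' j hj
    have hl := lam_anti (B := B) r r' (by rw [Fin.le_def]; omega)
    have h2 := tab_key hc r' j hj ⟨_, Nat.lt_succ_of_le h1⟩
    simp only [le_refl, true_iff] at h2
    have hpos : tabOf B c r' j ≠ 0 := by
      intro h
      have := (tab_key hc r' j hj 0).1 (by simp [h])
      rw [hc.1.1, g_sh0] at this
      omega
    obtain ⟨v, hv⟩ := Nat.exists_eq_succ_of_ne_zero hpos
    have h3 := ((hc.2 ⟨v, by omega⟩).2 r).2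
    have h4 := tab_key hc r j (by omega) ⟨v, by omega⟩
    have e : (⟨tabOf B c r' j, Nat.lt_succ_of_le h1⟩ : Fin (k+y+1)) = (⟨v, by omega⟩ : Fin (k+y)).succ :=
      Fin.ext hv
    rw [e, ← hr] at h2
    have := h4.2 (lt_of_lt_of_le h2 h3)
    simp only at this
    omega
  · unfold tabOf
    rw [if_neg (by omega)]

lemma sh_tab {c : Fin (k+y+1) → Sh x y} (hc : validS k (pathSh B) c) :
    (fun t : Fin (k+y+1) => shOf B (tabOf B c) t) = c := by
  funext t
  apply sh_ext
  intro r hr j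
  rw [shOf_key (tab_ssyt hc) _ ⟨r, hr⟩ j]
  constructor
  · rintro ⟨a, b⟩
    exact (tab_key hc ⟨r, hr⟩ j a t).1 b
  · intro h
    have a := lt_of_lt_of_le h (chain_le hc ⟨r, hr⟩ t)
    exact ⟨a, (tab_key hc ⟨r, hr⟩ j a t).2 h⟩

lemma tab_sh {S : Fin y → Fin x → ℕ} (hS : IsFlaggedSSYT k B S) :
    tabOf B (fun t : Fin (k+y+1) => shOf B S t) = S := by
  have hc := shOf_valid hS
  funext r j
  by_cases hj : (j : ℕ) < lam B r
  · have h0 : ∀ t : Fin (k+y+1), tabOf B (fun t : Fin (k+y+1) => shOf B S t) r j ≤ t ↔ S r j ≤ t := by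
      intro t
      rw [tab_key hc r j hj, shOf_key hS]
      simp [hj]
    have h1 := tab_le hc r j hj
    have h2 := (hS.1 r j hj).2
    have h3 := (h0 ⟨_, Nat.lt_succ_of_le h1⟩).1 le_rfl
    have h4 := (h0 ⟨S r j, by omega⟩).2 le_rfl
    exact le_antisymm h4 h3
  · rw [hS.2.2.2 r j (by omega)]
    unfold tabOf
    rw [if_neg hj]

lemma cardS (hy : 1 ≤ y) (a : Fin (k+1) → ℕ) (u : Fin (y-1) → ℕ) :
    Nat.card {S : Fin y → Fin x → ℕ // IsFlaggedSSYT k B S ∧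
        (∀ i : Fin (k+1), wt B S ((i : ℕ) + 1) + a i = x) ∧
        (∀ s : Fin (y-1), wt B S (k + 1 + ((s : ℕ) + 1)) = u s) ∧
        (∀ i : ℕ, k + y < i → wt B S i = 0)}
    = Nat.card {c : Fin (k+y+1) → Sh x y // validS k (pathSh B) c ∧
        (∀ i : Fin (k+1), statS c ⟨i, by omega⟩ + a i = x) ∧
        (∀ s : Fin (y-1), statS c ⟨k + 1 + s, by omega⟩ = u s)} := by
  have hst : ∀ S : Fin y → Fin x → ℕ, IsFlaggedSSYT k B S → ∀ t : Fin (k+y),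
      statS (fun t : Fin (k+y+1) => shOf B S t) t = wt B S ((t : ℕ) + 1) := by
    intro S hS t
    exact shOf_wt hS t
  have hst' : ∀ c : Fin (k+y+1) → Sh x y, validS k (pathSh B) c → ∀ t : Fin (k+y),
      wt B (tabOf B c) ((t : ℕ) + 1) = statS c t := by
    intro c hc t
    rw [← hst _ (tab_ssyt hc), sh_tab hc]
  refine Nat.card_congr ⟨fun S => ⟨fun t => shOf B S.1 t, shOf_valid S.2.1, fun i => ?_, fun s => ?_⟩,
    fun c => ⟨tabOf B c.1, tab_ssyt c.2.1, fun i => ?_, fun s => ?_, fun i hi => ?_⟩,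
    fun S => ?_, fun c => ?_⟩
  · rw [hst _ S.2.1]; exact S.2.2.1 i
  · rw [hst _ S.2.1]; exact S.2.2.2.1 s
  · have h := hst' _ c.2.1 ⟨i, by omega⟩
    simp only at h
    rw [h]; exact c.2.2.1 i
  · rw [← c.2.2.2 s, ← hst' _ c.2.1]; rfl
  · unfold wt
    rw [Nat.card_eq_zero]
    left
    refine ⟨fun rc => ?_⟩
    obtain ⟨⟨r, j⟩, h1, h2⟩ := rc
    have := tab_le c.2.1 r j h1
    simp only at h2
    omega
  · exact Subtype.ext (tab_sh S.2.1)
  · exact Subtype.ext (sh_tab c.2.1)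

end

/-! ### Extraction of coefficients -/

section
variable {A A' : Type*} [Fintype A] [Fintype A']

lemma mono_eq {m n : ℕ} (f : Fin m → ℕ) (f2 : Fin n → ℕ) :
    ((∏ i, MvPolynomial.X (Sum.inl i) ^ f i) * (∏ s, MvPolynomial.X (Sum.inr s) ^ f2 s) :
      MvPolynomial (Fin m ⊕ Fin n) ℕ)
      = MvPolynomial.monomial (Finsupp.equivFunOnFinite.symm (Sum.elim f f2)) 1 := by
  rw [MvPolynomial.monomial_eq, Finsupp.prod_fintype _ _ (fun i => pow_zero _), Fintype.prod_sum_type]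
  simp

open Classical in
lemma extract {m n : ℕ} (p : A → Prop) (p' : A' → Prop)
    (f : A → Fin m → ℕ) (f2 : A → Fin n → ℕ) (f' : A' → Fin m → ℕ) (f2' : A' → Fin n → ℕ)
    (h : (∑ a ∈ univ.filter p, ((∏ i, MvPolynomial.X (Sum.inl i) ^ f a i) *
        (∏ s, MvPolynomial.X (Sum.inr s) ^ f2 a s) : MvPolynomial (Fin m ⊕ Fin n) ℕ))
      = ∑ a ∈ univ.filter p', ((∏ i, MvPolynomial.X (Sum.inl i) ^ f' a i) *
        (∏ s, MvPolynomial.X (Sum.inr s) ^ f2' a s)))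
    (e : Fin m → ℕ) (e2 : Fin n → ℕ) :
    Nat.card {a // p a ∧ (∀ i, f a i = e i) ∧ ∀ s, f2 a s = e2 s}
      = Nat.card {a // p' a ∧ (∀ i, f' a i = e i) ∧ ∀ s, f2' a s = e2 s} := by
  have h' := congrArg (MvPolynomial.coeff (Finsupp.equivFunOnFinite.symm (Sum.elim e e2))) h
  simp only [mono_eq, MvPolynomial.coeff_sum, MvPolynomial.coeff_monomial,
    EmbeddingLike.apply_eq_iff_eq] at h'
  have key : ∀ (f e : Fin m → ℕ) (f2 e2 : Fin n → ℕ), Sum.elim f f2 = Sum.elim e e2 ↔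
      (∀ i, f i = e i) ∧ ∀ s, f2 s = e2 s := by
    intro f e f2 e2
    rw [funext_iff, Sum.forall]
    simp
  simp only [key, ← card_filter, filter_filter] at h'
  rw [Nat.card_eq_fintype_card, Fintype.card_subtype, Nat.card_eq_fintype_card, Fintype.card_subtype]
  convert h'
end

open Classical in
lemma pr_ite {R : Type*} [CommSemiring R] {A : Type*} [Fintype A] [DecidableEq A]
    (C : ℕ → A → A → Prop) (w : ℕ → A → A → R)
    (M : ℕ → Matrix A A R) (hM : ∀ t a b, M t a b = if C t a b then w t a b else 0) (n : ℕ) (i j : A) :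
    pr M n i j =
      ∑ c ∈ univ.filter (fun c : Fin (n+1) → A => (c 0 = i ∧ c (Fin.last n) = j) ∧
        ∀ t : Fin n, C t (c t.castSucc) (c t.succ)), ∏ t : Fin n, w t (c t.castSucc) (c t.succ) := by
  rw [pr_chain, sum_filter]
  refine sum_congr rfl fun c _ => ?_
  simp only [hM, prod_ite_zero, mem_univ, true_imp_iff]
  by_cases h1 : c 0 = i ∧ c (Fin.last n) = j
  · rw [if_pos h1]; simp [h1]
  · rw [if_neg h1, if_neg (fun h => h1 h.1)]

open Classical in
lemma main_poly {x y : ℕ} (k : ℕ) (hy : 1 ≤ y) (L : Sh x y) :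
    (∑ c ∈ univ.filter (validP k L),
      ((∏ i, MvPolynomial.X (Sum.inl i) ^ statP c i) *
        (∏ s : Fin (y-1), MvPolynomial.X (Sum.inr s) ^ ustP c s) :
        MvPolynomial (Fin (k+1) ⊕ Fin (y-1)) ℕ))
    = ∑ c ∈ univ.filter (validS k L),
      ((∏ i : Fin (k+1), MvPolynomial.X (Sum.inl i) ^ statS c ⟨i, by omega⟩) *
        (∏ s : Fin (y-1), MvPolynomial.X (Sum.inr s) ^ statS c ⟨k + 1 + s, by omega⟩)) := by
  let ζ : ℕ → MvPolynomial (Fin (k+1) ⊕ Fin (y-1)) ℕ := fun t =>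
    if h : t < k + 1 then MvPolynomial.X (Sum.inl ⟨t, h⟩)
    else if h : t - (k+1) < y - 1 then MvPolynomial.X (Sum.inr ⟨t - (k+1), h⟩) else 1
  have z1 : ∀ i : Fin (k+1), ζ i = MvPolynomial.X (Sum.inl i) := fun i => by
    simp only [ζ]; rw [dif_pos i.isLt]
  have z2 : ∀ s : Fin (y-1), ζ (k + 1 + s) = MvPolynomial.X (Sum.inr s) := fun s => by
    simp only [ζ]; rw [dif_neg (by omega), dif_pos (by have := s.isLt; omega)]
    congr 2; apply Fin.ext; simp
  have h := (main_alg k hy ζ L).symm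
  have h1 := pr_ite (A := Sh x y)
    (fun _ κ l => (∀ r, g κ r ≤ g l r) ∧ (∀ r, y - 1 ≤ r → g l (r+1) ≤ g κ r))
    (fun t κ l => ∏ r ∈ range y, (ζ (k + (r+1)) ^ (max (g κ r) (g l (r+1)) - g κ r) *
      ζ t ^ (g l r - max (g κ r) (g l (r+1)))))
    (fun i => V (y-1) (ζ i) (fun s => ζ (k+s))) (fun _ _ _ => by simp only [V]; congr) (k+1) (sh0 x y) L
  have h2 := pr_ite (A := Sh x y)
    (fun t κ l => (∀ r, r < t - k → g l r = g κ r) ∧ (∀ r, g κ r ≤ g l r ∧ g l (r+1) ≤ g κ r))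
    (fun t κ l => ζ t ^ (∑ r ∈ range y, (g l r - g κ r)))
    (fun t => U (t-k) (ζ t)) (fun _ _ _ => by simp only [U]; congr) (k+y) (sh0 x y) L
  have h3 := (h1.symm.trans h).trans h2
  refine Eq.trans ?_ (h3.trans ?_)
  · refine sum_congr ?_ fun c _ => ?_
    · ext c
      simp only [mem_filter, mem_univ, true_and, validP]
      refine and_congr_right fun _ => forall_congr' fun t => ⟨fun h => ⟨h, fun r hr => ?_⟩, fun h => h.1⟩
      rw [g_ge _ _ (by omega)]; omega
    · simp only [prod_mul_distrib]
      rw [mul_comm]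
      congr 1
      · rw [prod_comm]
        simp only [prod_pow_eq_pow_sum]
        obtain ⟨n, rfl⟩ : ∃ n, y = n + 1 := ⟨y - 1, by omega⟩
        rw [prod_range_succ, sum_eq_zero (s := univ) (fun t _ => ?_), pow_zero, mul_one, prod_range]
        · refine prod_congr rfl fun s _ => ?_
          rw [← z2, show k + 1 + (s : ℕ) = k + (s + 1) by omega]
          rfl
        · rw [g_ge _ _ (le_refl (n+1))]; simp
      · refine prod_congr rfl fun t _ => ?_
        rw [prod_pow_eq_pow_sum, z1]; rfl
  · refine sum_congr (by ext c; simp only [mem_filter, mem_univ, true_and, validS]) fun c _ => ?_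
    have e : k + y = (k + 1) + (y - 1) := by omega
    let F : ℕ → MvPolynomial (Fin (k+1) ⊕ Fin (y-1)) ℕ := fun t =>
      if h : t < k + y then ζ t ^ statS c ⟨t, h⟩ else 1
    have hF : ∀ t (h : t < k + y), F t = ζ t ^ statS c ⟨t, h⟩ := fun t h => by
      simp only [F]; rw [dif_pos h]
    have : ∏ t : Fin (k+y), F t = ∏ t ∈ range (k+y), F t := (prod_range F).symm
    rw [e, prod_range_add, prod_range, prod_range] at this
    refine Eq.trans (prod_congr rfl fun t _ => (hF t t.isLt).symm) (Eq.trans ?_ (Eq.trans this ?_))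
    · rw [Fin.prod_univ_eq_prod_range F, Fin.prod_univ_eq_prod_range F, e]
    · congr 1
      · refine prod_congr rfl fun t _ => ?_
        rw [hF _ (by omega), z1]
      · refine prod_congr rfl fun s _ => ?_
        rw [hF _ (by omega), z2]

lemma final {x y : ℕ} (k : ℕ) (hy : 1 ≤ y) (L : Sh x y) (a : Fin (k+1) → ℕ) (u : Fin (y-1) → ℕ) :
    Nat.card {c : Fin (k+2) → Sh x y // validP k L c ∧
        (∀ i, statP c i + a i = x) ∧ (∀ s : Fin (y-1), ustP c s = u s)}
    = Nat.card {c : Fin (k+y+1) → Sh x y // validS k L c ∧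
        (∀ i : Fin (k+1), statS c ⟨i, by omega⟩ + a i = x) ∧
        (∀ s : Fin (y-1), statS c ⟨k + 1 + s, by omega⟩ = u s)} := by
  by_cases ha : ∀ i, a i ≤ x
  · have key : ∀ (f : Fin (k+1) → ℕ), (∀ i, f i + a i = x) ↔ ∀ i, f i = x - a i := fun f =>
      forall_congr' fun i => by have := ha i; omega
    have := extract (validP k L) (validS k L) statP (fun c s => ustP c s)
      (fun c i => statS c ⟨i, by omega⟩) (fun c s => statS c ⟨k + 1 + s, by omega⟩)
      (by convert main_poly k hy L) (fun i => x - a i) u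
    simp only [← key] at this
    exact this
  · push Not at ha
    obtain ⟨i, hi⟩ := ha
    rw [Nat.card_eq_zero.mpr (Or.inl ⟨fun c => by have := c.2.2.1 i; omega⟩),
      Nat.card_eq_zero.mpr (Or.inl ⟨fun c => by have := c.2.2.1 i; omega⟩)]

end FS

/-- The bijection `Ψ`: `k`-tuples in `P^k(T,B)` with statistics `(h_i)` and `(u_s)`
are equinumerous with `k`-flagged SSYT of shape `λ(T,B)` with weight
`(x−h_0, …, x−h_k, u_1, …, u_{y−1})`. -/
theorem stmt15 {x y : ℕ} (k : ℕ) (hk : 1 ≤ k) (hy : 1 ≤ y)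
    (T B : Fin x → Fin (y+1))
    (hT : ∀ j, (T j : ℕ) = y) (hB : Monotone B) (hTB : ∀ j, B j ≤ T j)
    (hBy : ∀ j, (B j : ℕ) < y)
    (a : Fin (k+1) → ℕ) (u : Fin (y-1) → ℕ) :
    Nat.card {P : Fin k → Fin x → Fin (y+1) // InPk T B P ∧
        (∀ i, hstat T B P i = a i) ∧ (∀ s, ustat T B P s = u s)}
    = Nat.card {S : Fin y → Fin x → ℕ // IsFlaggedSSYT k B S ∧
        (∀ i : Fin (k+1), wt B S ((i : ℕ) + 1) + a i = x) ∧
        (∀ s : Fin (y-1), wt B S (k + 1 + ((s : ℕ) + 1)) = u s) ∧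
        (∀ i : ℕ, k + y < i → wt B S i = 0)} := by
  rw [FS.cardP hT hB a u, FS.cardS hy a u]
  exact FS.final k hy (FS.pathSh B) a u
end
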